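/- arXiv:math/0107071 — 4 statements merged into one kernel-verified Lean document; each statement's English description precedes it below -/
import Mathlib

section
/- Let G be a countable abelian group written as the union of an increasing sequence of finitely generated subgroups G₀ ⊆ G₁ ⊆ G₂ ⊆ ⋯, and let H be any abelian group. Then there is an isomorphism of abelian groups between Pext¹(G,H) = ⋂_{n≥1} n·Ext¹(G,H) and lim¹_i Hom(G_i,H), i.e. the cokernel of the Eilenberg map Ψ : ∏_i Hom(G_i,H) → ∏_i Hom(G_i,H). -/
open CategoryTheory DirectSum

/-- `Ext¹(G,H)`: the Ext group `Ext¹_ℤ(G,H)` of abelian groups (ℤ-modules). -/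
noncomputable abbrev Ext1 (G H : Type) [AddCommGroup G] [AddCommGroup H] : Type :=
  ((_root_.Ext ℤ (ModuleCat.{0} ℤ) 1).obj (Opposite.op (ModuleCat.of ℤ G))).obj (ModuleCat.of ℤ H)

/-- `Pext¹(G,H) = ⋂_{n ≥ 1} n · Ext¹(G,H)`. -/
noncomputable def Pext1 (G H : Type) [AddCommGroup G] [AddCommGroup H] :
    AddSubgroup (Ext1 G H) :=
  ⨅ (n : ℕ) (_ : 1 ≤ n), (n • AddMonoidHom.id (Ext1 G H)).range

/-- The Eilenberg map `Ψ : ∏_i Hom(G_i,H) → ∏_i Hom(G_i,H)`,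
`Ψ(f)_i = f_i − f_{i+1} ∘ ι_i` where `ι_i : G_i ↪ G_{i+1}` is the inclusion. -/
noncomputable def eilenberg (G H : Type) [AddCommGroup G] [AddCommGroup H]
    (Gs : ℕ → AddSubgroup G) (hmono : Monotone Gs) :
    (∀ i, ↥(Gs i) →+ H) →+ (∀ i, ↥(Gs i) →+ H) :=
  AddMonoidHom.mk'
    (fun f i => f i - (f (i + 1)).comp (AddSubgroup.inclusion (hmono (Nat.le_succ i))))
    (by
      intro a b
      funext i
      simp [AddMonoidHom.add_comp]
      abel)

/-!
Embed `H` in a divisible group `I` with quotient `q : I → Q`. Then `Ext¹(G, H)` is the cokernel of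
`q ∘ - : Hom(G, I) → Hom(G, Q)`, and the class of `f : G → Q` lies in `Pext¹(G, H)` if and only if
`f` lifts along `q` on every `Gᵢ`. Given lifts `uᵢ : Gᵢ → I` of `f|Gᵢ`, the differences
`uᵢ - uᵢ₊₁|Gᵢ` take values in `H` and represent the corresponding class in `lim¹ Hom(Gᵢ, H)`.

If the class of `f` is divisible, then `f` lifts on a finitely generated `A ≤ G` because, for `n`
killing the torsion of `A`, every map `n • g : A → Q` factors through the free group `A / tors A`.
Conversely, if `f` lifts on all cyclic subgroups, then it lifts on the bounded group `G[n]`, since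
a pure subgroup with bounded quotient is a direct summand. Extending that lift to `l : G → I`, the
map `f - q ∘ l` kills `G[n]`, hence is `n` times a homomorphism, because `Q` is divisible.
-/

/-- The isomorphism between the targets of two surjections with the same source and kernel. -/
noncomputable def addEquivOfKerEq {T A B : Type*} [AddCommGroup T] [AddCommGroup A]
    [AddCommGroup B] {u : T →+ A} {v : T →+ B} (hu : Function.Surjective u)
    (hv : Function.Surjective v) (huv : u.ker = v.ker) : A ≃+ B :=
  (QuotientAddGroup.quotientKerEquivOfSurjective u hu).symm.trans <|
    (QuotientAddGroup.quotientAddEquivOfEq huv).trans <|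
      QuotientAddGroup.quotientKerEquivOfSurjective v hv

section ExtComparison

open Abelian

universe w v u

variable {C : Type u} [Category.{v} C] [Abelian C]

section DerivedFunctor

variable (R : Type*) [Ring R] [Linear R C] {X : C} (P : ProjectiveResolution X) (Y : C) (n : ℕ)

/-- The segment `Hom(Pₙ, Y) ⟶ Hom(Pₙ₊₁, Y) ⟶ Hom(Pₙ₊₂, Y)` of the complex computing
`Ext(X, Y)` from a projective resolution `P` of `X`. -/
noncomputable abbrev homShortComplex : ShortComplex (ModuleCat R) :=
  (P.complex.linearYonedaObj R Y).sc' n (n + 1) (n + 2)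

/-- The class of an `(n + 1)`-cocycle of `Hom(P, Y)` in `Abelian.Ext X Y (n + 1)`. -/
noncomputable def cocycleToExt [HasExt.{w} C] :
    LinearMap.ker (homShortComplex R P Y n).g.hom →+ Ext.{w} X Y (n + 1) :=
  AddMonoidHom.mk' (fun z => P.extMk z.1 (n + 2) rfl z.2)
    (fun z z' => (P.add_extMk z.1 z'.1 (n + 2) rfl z.2 z'.2).symm)

theorem cocycleToExt_surjective [HasExt.{w} C] :
    Function.Surjective (cocycleToExt.{w} R P Y n) := fun α => by
  obtain ⟨z, hz, rfl⟩ := P.extMk_surjective α (n + 2) rfl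
  exact ⟨⟨z, hz⟩, rfl⟩

theorem cocycleToExt_eq_zero_iff [HasExt.{w} C]
    (z : LinearMap.ker (homShortComplex R P Y n).g.hom) :
    cocycleToExt.{w} R P Y n z = 0 ↔
      z ∈ LinearMap.range (homShortComplex R P Y n).moduleCatToCycles :=
  (P.extMk_eq_zero_iff z.1 (n + 2) rfl z.2 n rfl).trans <|
    exists_congr fun _ => ⟨fun h => Subtype.ext h, fun h => congrArg Subtype.val h⟩

/-- The derived-functor `Ext` of a category with enough projectives agrees with the `Ext`-groups
defined in the derived category. -/
noncomputable def extAddEquivAbelianExt [EnoughProjectives C] [HasExt.{w} C] (X Y : C) (n : ℕ) :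
    ((_root_.Ext R C (n + 1)).obj (Opposite.op X)).obj Y ≃+ Ext.{w} X Y (n + 1) :=
  let P := ProjectiveResolution.of X
  let homologyEquiv := (P.isoExt (R := R) (n + 1) Y ≪≫
    (P.complex.linearYonedaObj R Y).homologyIsoSc' n (n + 1) (n + 2) (by simp) (by simp) ≪≫
    (homShortComplex R P Y n).moduleCatHomologyIso).toLinearEquiv.toAddEquiv
  homologyEquiv.trans <| addEquivOfKerEq (u := (Submodule.mkQ _).toAddMonoidHom)
    (Submodule.mkQ_surjective _) (cocycleToExt_surjective R P Y n) <| by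
      ext z
      exact (Submodule.Quotient.mk_eq_zero _).trans (cocycleToExt_eq_zero_iff R P Y n z).symm

end DerivedFunctor

variable [HasExt.{w} C] {S : ShortComplex C} (hS : S.ShortExact) (X : C)

/-- The connecting homomorphism `Hom(X, S.X₃) ⟶ Ext¹(X, S.X₁)` of a short exact sequence. -/
noncomputable def homToExt : (X ⟶ S.X₃) →+ Ext.{w} X S.X₁ 1 :=
  (hS.extClass.postcomp X (zero_add 1)).comp Ext.addEquiv₀.symm.toAddMonoidHom

theorem homToExt_surjective [Injective S.X₂] : Function.Surjective (homToExt.{w} hS X) :=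
  fun e => by
    obtain ⟨x, rfl⟩ := Ext.covariant_sequence_exact₁ X hS e (Ext.eq_zero_of_injective _)
      (zero_add 1)
    exact ⟨Ext.addEquiv₀ x, by simp [homToExt]⟩

theorem homToExt_eq_zero_iff {X : C} (f : X ⟶ S.X₃) :
    homToExt.{w} hS X f = 0 ↔ ∃ l : X ⟶ S.X₂, l ≫ S.g = f := by
  constructor
  · intro hf
    obtain ⟨x, hx⟩ := Ext.covariant_sequence_exact₃ X hS (Ext.mk₀ f) (zero_add 1) hf
    obtain ⟨l, rfl⟩ := Ext.addEquiv₀.symm.surjective x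
    exact ⟨l, Ext.addEquiv₀.symm.injective (by simpa using hx)⟩
  · rintro ⟨l, rfl⟩
    change (Ext.mk₀ (l ≫ S.g)).comp hS.extClass (zero_add 1) = 0
    rw [← Ext.mk₀_comp_mk₀, Ext.comp_assoc _ _ _ (zero_add 0) (zero_add 1) (zero_add 1),
      hS.comp_extClass, Ext.comp_zero]

end ExtComparison

theorem injective_moduleCatOf_int (I : Type*) [AddCommGroup I] [DivisibleBy I ℤ] :
    Injective (ModuleCat.of ℤ I) :=
  (AddCommGrpCat.injective_as_module_iff I).mpr (AddCommGrpCat.injective_of_divisible I)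

/-- Homomorphisms of abelian groups as morphisms of `ℤ`-modules. -/
def intModuleHomAddEquiv.{u} (A B : Type u) [AddCommGroup A] [AddCommGroup B] :
    (A →+ B) ≃+ (ModuleCat.of ℤ A ⟶ ModuleCat.of ℤ B) where
  toFun f := ModuleCat.ofHom f.toIntLinearMap
  invFun f := f.hom.toAddMonoidHom
  left_inv _ := rfl
  right_inv _ := rfl
  map_add' _ _ := rfl

theorem exists_surjective_toExt1 {G H I Q : Type} [AddCommGroup G] [AddCommGroup H]
    [AddCommGroup I] [AddCommGroup Q] [DivisibleBy I ℤ] {ι : H →+ I} {q : I →+ Q}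
    (hι : Function.Injective ι) (hιq : Function.Exact ι q) (hq : Function.Surjective q) :
    ∃ δ : (G →+ Q) →+ Ext1 G H, Function.Surjective δ ∧
      ∀ f, δ f = 0 ↔ ∃ l : G →+ I, q.comp l = f := by
  let S := ModuleCat.shortComplexOfCompEqZero ι.toIntLinearMap q.toIntLinearMap
    (Function.Exact.linearMap_comp_eq_zero hιq)
  have hS : S.ShortExact := ModuleCat.shortComplex_shortExact S hιq hι hq
  have : Injective S.X₂ := injective_moduleCatOf_int I
  let e := intModuleHomAddEquiv G Q
  let e' := (extAddEquivAbelianExt.{0} ℤ (ModuleCat.of ℤ G) (ModuleCat.of ℤ H) 0).symm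
  refine ⟨e'.toAddMonoidHom.comp ((homToExt hS (ModuleCat.of ℤ G)).comp e.toAddMonoidHom),
    e'.surjective.comp ((homToExt_surjective hS _).comp e.surjective), fun f => ?_⟩
  refine (map_eq_zero_iff e' e'.injective).trans ((homToExt_eq_zero_iff hS (e f)).trans ?_)
  refine (intModuleHomAddEquiv G I).surjective.exists.trans (exists_congr fun l => ?_)
  change e (q.comp l) = e f ↔ _
  exact e.injective.eq_iff

section PureSubgroup

variable {E : Type*} [AddCommGroup E]

/-- `H ∩ T = 0` and `H`, seen as a subgroup of `E ⧸ T`, is pure: an element of `H` that is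
divisible by `n` in `E` modulo `T` is divisible by `n` in `H`. The case `n = 0` gives `H ∩ T = 0`,
and `T = 0` is purity of `H` in `E`. -/
def IsPureModulo (H T : AddSubgroup E) : Prop :=
  ∀ (n : ℤ) (x : E), ∀ h ∈ H, n • x - h ∈ T → ∃ h' ∈ H, n • h' = h

theorem exists_eq_mul_add_exponent_mul {c z : E} {n k : ℤ} (hE : AddMonoid.ExponentExists E)
    (hc : addOrderOf c = AddMonoid.exponent E) (hnz : n • z = k • c) :
    ∃ k' j : ℤ, k = n * k' + AddMonoid.exponent E * j := by
  set e : ℤ := (AddMonoid.exponent E : ℤ) with he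
  have he0 : e ≠ 0 := Int.natCast_ne_zero.mpr hE.exponent_ne_zero
  have hez : e • z = 0 := by rw [he, natCast_zsmul, AddMonoid.exponent_nsmul_eq_zero]
  have hbezout := Int.gcd_eq_gcd_ab n e
  obtain ⟨n', hn'⟩ := Int.gcd_dvd_left n e
  obtain ⟨e', he'⟩ := Int.gcd_dvd_right n e
  set d : ℤ := (Int.gcd n e : ℤ)
  have hkill : (e' * k) • c = 0 := by
    rw [mul_zsmul, ← hnz, ← mul_zsmul, hn', show e' * (d * n') = n' * e by rw [he']; ring,
      mul_zsmul, hez, zsmul_zero]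
  have hdvd : e' * d ∣ e' * k := by
    rw [mul_comm e' d, ← he', he, ← hc]
    exact addOrderOf_dvd_iff_zsmul_eq_zero.mpr hkill
  have he'0 : e' ≠ 0 := right_ne_zero_of_mul (he' ▸ he0)
  obtain ⟨m, rfl⟩ := Int.dvd_of_mul_dvd_mul_left he'0 hdvd
  exact ⟨n.gcdA e * m, n.gcdB e * m, by rw [hbezout]; ring⟩

namespace IsPureModulo

variable {H T : AddSubgroup E}

theorem disjoint (hT : IsPureModulo H T) : Disjoint H T :=
  AddSubgroup.disjoint_def.mpr fun {x} hxH hxT => by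
    obtain ⟨h', -, h0⟩ := hT 0 0 x hxH (by simpa using hxT)
    rw [← h0, zero_zsmul]

theorem sSup_of_isChain {c : Set (AddSubgroup E)} (hc : IsChain (· ≤ ·) c) (hne : c.Nonempty)
    (hpure : ∀ T ∈ c, IsPureModulo H T) : IsPureModulo H (sSup c) := fun n x h hh hx => by
  obtain ⟨T, hTc, hxT⟩ := (AddSubgroup.mem_sSup_of_directedOn hne hc.directedOn).mp hx
  exact hpure T hTc n x h hh hxT

theorem exists_maximal (hH : IsPureModulo H ⊥) : ∃ T, Maximal (IsPureModulo H) T := by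
  obtain ⟨T, -, hT⟩ := zorn_le_nonempty₀ {T | IsPureModulo H T}
    (fun c hc hchain T hT => ⟨_, sSup_of_isChain hchain ⟨T, hT⟩ hc, fun _ => le_sSup⟩) ⊥ hH
  exact ⟨T, hT⟩

-- An element of maximal order generates a pure cyclic subgroup, so `k • x` can be absorbed into
-- `n • z` up to a multiple of `exponent • x`, which lies in `T`.
theorem sup_zmultiples (hT : IsPureModulo H T) (hE : AddMonoid.ExponentExists (E ⧸ H ⊔ T)) {x : E}
    (hx : addOrderOf (x : E ⧸ H ⊔ T) = AddMonoid.exponent (E ⧸ H ⊔ T))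
    (hxT : AddMonoid.exponent (E ⧸ H ⊔ T) • x ∈ T) :
    IsPureModulo H (T ⊔ AddSubgroup.zmultiples x) := fun n z h hh hz => by
  obtain ⟨t, ht, _, ⟨k, rfl⟩, htk⟩ := AddSubgroup.mem_sup.mp hz
  have hnz : n • (z : E ⧸ H ⊔ T) = k • (x : E ⧸ H ⊔ T) := by
    refine (QuotientAddGroup.eq_iff_sub_mem (x := n • z) (y := k • x)).mpr ?_
    rw [show n • z - k • x = h + t by rw [← sub_add_cancel (n • z) h, ← htk]; abel]
    exact AddSubgroup.add_mem_sup hh ht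
  obtain ⟨k', j, rfl⟩ := exists_eq_mul_add_exponent_mul hE hx hnz
  refine hT n (z - k' • x) h hh ?_
  set e := AddMonoid.exponent (E ⧸ H ⊔ T)
  have hreduce : n • (z - k' • x) - h = t + j • e • x := by
    rw [← natCast_zsmul, zsmul_sub, sub_right_comm, ← htk]
    module
  rw [hreduce]
  exact T.add_mem ht (T.zsmul_mem hxT j)

theorem exists_mk_eq_and_nsmul_mem (hT : IsPureModulo H T) {c : E ⧸ H ⊔ T} {e : ℕ}
    (hc : e • c = 0) : ∃ x : E, (x : E ⧸ H ⊔ T) = c ∧ e • x ∈ T := by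
  obtain ⟨y, rfl⟩ := QuotientAddGroup.mk_surjective c
  obtain ⟨h, hh, t, ht, hht⟩ := AddSubgroup.mem_sup.mp
    ((QuotientAddGroup.eq_zero_iff (N := H ⊔ T) (e • y)).mp hc)
  obtain ⟨h', hh', rfl⟩ := hT e y h hh (by rw [natCast_zsmul, ← hht]; simpa using ht)
  refine ⟨y - h', QuotientAddGroup.eq_iff_sub_mem.mpr ?_, ?_⟩
  · simpa using AddSubgroup.mem_sup_left (T := T) hh'
  · rw [nsmul_sub, ← hht, natCast_zsmul, add_sub_cancel_left]
    exact ht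

theorem codisjoint_of_maximal (hT : Maximal (IsPureModulo H) T)
    (hE : AddMonoid.ExponentExists (E ⧸ H ⊔ T)) : Codisjoint H T := by
  obtain ⟨c, hc⟩ := AddMonoid.exists_addOrderOf_eq_exponent hE
  obtain ⟨x, rfl, hxT⟩ := hT.prop.exists_mk_eq_and_nsmul_mem (AddMonoid.exponent_nsmul_eq_zero c)
  have hxmem : x ∈ T := hT.le_of_ge (hT.prop.sup_zmultiples hE hc hxT) le_sup_left
    (AddSubgroup.mem_sup_right (AddSubgroup.mem_zmultiples x))
  have hx0 : (x : E ⧸ H ⊔ T) = 0 :=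
    (QuotientAddGroup.eq_zero_iff x).mpr (AddSubgroup.mem_sup_right hxmem)
  rw [hx0, addOrderOf_zero] at hc
  have := AddMonoid.exp_eq_one_iff.mp hc.symm
  exact codisjoint_iff.mpr (QuotientAddGroup.subsingleton_iff.mp this)

theorem exists_isCompl (hH : IsPureModulo H ⊥) (hE : AddMonoid.ExponentExists (E ⧸ H)) :
    ∃ T, IsCompl H T := by
  obtain ⟨T, hT⟩ := hH.exists_maximal
  refine ⟨T, hT.prop.disjoint, codisjoint_of_maximal hT ?_⟩
  obtain ⟨n, hn, hkill⟩ := hE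
  refine ⟨n, hn, fun c => ?_⟩
  obtain ⟨x, rfl⟩ := QuotientAddGroup.mk_surjective c
  exact (QuotientAddGroup.eq_zero_iff (n • x)).mpr (AddSubgroup.mem_sup_left
    ((QuotientAddGroup.eq_zero_iff (n • x)).mp (hkill x)))

end IsPureModulo

end PureSubgroup

section CyclicLifts

variable {B I Q : Type*} [AddCommGroup B] [AddCommGroup I] [AddCommGroup Q]

/-- Every value `f b` has a preimage under `q` that is killed by all integers killing `b`; that is,
`f` lifts along `q` on every cyclic subgroup of `B`. -/
def LiftsOnCyclics (q : I →+ Q) (f : B →+ Q) : Prop :=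
  ∀ b, ∃ y, q y = f b ∧ ∀ n : ℤ, n • b = 0 → n • y = 0

theorem isPureModulo_ker_bot {q : I →+ Q} (hq : LiftsOnCyclics q (AddMonoidHom.id Q)) :
    IsPureModulo q.ker ⊥ := fun n x h hh hx => by
  obtain ⟨y, hy, hny⟩ := hq (q x)
  have hnx : n • x = h := sub_eq_zero.mp hx
  refine ⟨x - y, by simp [hy], ?_⟩
  rw [zsmul_sub, hnx, hny n (by rw [← map_zsmul, hnx, hh]), sub_zero]

theorem exists_section_of_isCompl_ker {q : I →+ Q} (hq : Function.Surjective q)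
    {T : AddSubgroup I} (hT : IsCompl q.ker T) : ∃ s : Q →+ I, q.comp s = AddMonoidHom.id Q := by
  have hinj : Function.Injective (q.comp T.subtype) :=
    (injective_iff_map_eq_zero _).mpr fun t ht =>
      Subtype.ext (AddSubgroup.disjoint_def.mp hT.disjoint ht t.2)
  have hsurj : Function.Surjective (q.comp T.subtype) := fun b => by
    obtain ⟨x, rfl⟩ := hq b
    obtain ⟨h, hh, t, ht, rfl⟩ := AddSubgroup.mem_sup.mp
      (hT.codisjoint.eq_top ▸ AddSubgroup.mem_top x)
    exact ⟨⟨t, ht⟩, by simp [q.mem_ker.mp hh]⟩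
  let e := AddEquiv.ofBijective (q.comp T.subtype) ⟨hinj, hsurj⟩
  exact ⟨T.subtype.comp e.symm.toAddMonoidHom, AddMonoidHom.ext e.apply_symm_apply⟩

theorem exists_section_of_liftsOnCyclics {q : I →+ Q} (hQ : AddMonoid.ExponentExists Q)
    (hq : LiftsOnCyclics q (AddMonoidHom.id Q)) : ∃ s : Q →+ I, q.comp s = AddMonoidHom.id Q := by
  have hker : AddMonoid.ExponentExists (I ⧸ q.ker) := by
    obtain ⟨n, hn, hkill⟩ := hQ
    refine ⟨n, hn, fun c => QuotientAddGroup.kerLift_injective q ?_⟩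
    rw [map_nsmul, hkill, map_zero]
  obtain ⟨T, hT⟩ := (isPureModulo_ker_bot hq).exists_isCompl hker
  exact exists_section_of_isCompl_ker (fun b => (hq b).imp fun _ h => h.1) hT

theorem exists_lift_of_liftsOnCyclics {q : I →+ Q} {f : B →+ Q} (hB : AddMonoid.ExponentExists B)
    (hf : LiftsOnCyclics q f) : ∃ l : B →+ I, q.comp l = f := by
  let E := (f.comp (AddMonoidHom.fst B I)).eqLocus (q.comp (AddMonoidHom.snd B I))
  let p : E →+ B := (AddMonoidHom.fst B I).comp E.subtype
  have hp : LiftsOnCyclics p (AddMonoidHom.id B) := fun b => by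
    obtain ⟨y, hy, hny⟩ := hf b
    exact ⟨⟨(b, y), hy.symm⟩, rfl, fun n hn => Subtype.ext (Prod.ext hn (hny n hn))⟩
  obtain ⟨s, hs⟩ := exists_section_of_liftsOnCyclics hB hp
  refine ⟨(AddMonoidHom.snd B I).comp (E.subtype.comp s), AddMonoidHom.ext fun b => ?_⟩
  exact (s b).2.symm.trans (congrArg f (DFunLike.congr_fun hs b))

end CyclicLifts

section Divisible

variable {A M G I Q : Type*} [AddCommGroup A] [AddCommGroup M] [AddCommGroup G] [AddCommGroup I]
  [AddCommGroup Q]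

theorem exists_comp_eq_of_ker_le [DivisibleBy Q ℤ] {φ : G →+ M} {f : G →+ Q}
    (h : φ.ker ≤ f.ker) : ∃ g : M →+ Q, g.comp φ = f := by
  obtain ⟨g, hg⟩ := Module.Baer.extension_property_addMonoidHom (Module.Baer.of_divisible Q)
    (QuotientAddGroup.kerLift φ) (QuotientAddGroup.kerLift_injective φ)
    (QuotientAddGroup.lift φ.ker f h)
  exact ⟨g, AddMonoidHom.ext fun x => DFunLike.congr_fun hg (x : G ⧸ φ.ker)⟩

theorem exists_comp_subtype_eq [DivisibleBy Q ℤ] {A : AddSubgroup G} (f : A →+ Q) :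
    ∃ g : G →+ Q, g.comp A.subtype = f :=
  exists_comp_eq_of_ker_le (by simp)

/-- `f` is divisible in the cokernel of `q ∘ - : Hom(G, I) → Hom(G, Q)`. -/
def IsDivisibleModulo (q : I →+ Q) (f : G →+ Q) : Prop :=
  ∀ n : ℕ, 1 ≤ n → ∃ (g : G →+ Q) (l : G →+ I), f = n • g + q.comp l

theorem LiftsOnCyclics.isDivisibleModulo [DivisibleBy I ℤ] [DivisibleBy Q ℤ] {q : I →+ Q}
    {f : G →+ Q} (hf : LiftsOnCyclics q f) : IsDivisibleModulo q f := fun n hn => by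
  let K := (nsmulAddMonoidHom (α := G) n).ker
  have hK : AddMonoid.ExponentExists K := ⟨n, hn, fun x => Subtype.ext x.2⟩
  have hfK : LiftsOnCyclics q (f.comp K.subtype) := fun x =>
    (hf x).imp fun _ ⟨hy, hny⟩ => ⟨hy, fun k hk => hny k (congrArg Subtype.val hk)⟩
  obtain ⟨lK, hlK⟩ := exists_lift_of_liftsOnCyclics hK hfK
  obtain ⟨l, rfl⟩ := exists_comp_subtype_eq lK
  have hker : K ≤ (f - q.comp l).ker := fun x hx =>
    sub_eq_zero.mpr (DFunLike.congr_fun hlK ⟨x, hx⟩).symm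
  obtain ⟨g, hg⟩ := exists_comp_eq_of_ker_le hker
  refine ⟨g, l, ?_⟩
  rw [← sub_eq_iff_eq_add, ← hg]
  ext x
  simp

variable (A) in
theorem exists_nsmul_torsion_eq_zero [Module.Finite ℤ A] :
    ∃ n : ℕ, 1 ≤ n ∧ ∀ a ∈ Submodule.torsion ℤ A, n • a = 0 := by
  have : Finite (Submodule.torsion ℤ A) :=
    Module.finite_of_fg_torsion _ Submodule.torsion_isTorsion
  exact ⟨Nat.card (Submodule.torsion ℤ A), Nat.card_pos, fun a ha =>
    congrArg Subtype.val (card_nsmul_eq_zero' (x := (⟨a, ha⟩ : Submodule.torsion ℤ A)))⟩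

theorem exists_lift_of_torsion_le_ker [Module.Finite ℤ A] {q : I →+ Q}
    (hq : Function.Surjective q) {f : A →+ Q} (hf : ∀ a ∈ Submodule.torsion ℤ A, f a = 0) :
    ∃ l : A →+ I, q.comp l = f := by
  have : Module.Free ℤ (A ⧸ Submodule.torsion ℤ A) := Module.free_of_finite_type_torsion_free'
  obtain ⟨l, hl⟩ := Module.projective_lifting_property q.toIntLinearMap
    ((Submodule.torsion ℤ A).liftQ f.toIntLinearMap hf) hq
  exact ⟨(l.comp (Submodule.mkQ _)).toAddMonoidHom,
    AddMonoidHom.ext fun a => DFunLike.congr_fun hl (Submodule.Quotient.mk a)⟩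

theorem IsDivisibleModulo.exists_lift [Module.Finite ℤ A] {q : I →+ Q}
    (hq : Function.Surjective q) {f : A →+ Q} (hf : IsDivisibleModulo q f) :
    ∃ l : A →+ I, q.comp l = f := by
  obtain ⟨n, hn, htors⟩ := exists_nsmul_torsion_eq_zero A
  obtain ⟨g, l, rfl⟩ := hf n hn
  obtain ⟨l', hl'⟩ := exists_lift_of_torsion_le_ker hq (f := n • g) fun a ha => by
    rw [AddMonoidHom.nsmul_apply, ← map_nsmul, htors a ha, map_zero]
  exact ⟨l' + l, by rw [AddMonoidHom.comp_add, hl']⟩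

theorem IsDivisibleModulo.comp {q : I →+ Q} {f : G →+ Q} (hf : IsDivisibleModulo q f)
    (φ : A →+ G) : IsDivisibleModulo q (f.comp φ) := fun n hn => by
  obtain ⟨g, l, rfl⟩ := hf n hn
  exact ⟨g.comp φ, l.comp φ, rfl⟩

end Divisible

theorem exists_comp_eq_of_comp_eq_zero {A B H I : Type*} [AddCommGroup A] [AddCommGroup B]
    [AddCommGroup H] [AddCommGroup I] {ι : H →+ I} {q : I →+ A} (hι : Function.Injective ι)
    (hιq : Function.Exact ι q) {u : B →+ I} (hu : q.comp u = 0) :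
    ∃ h : B →+ H, ι.comp h = u := by
  let e := AddMonoidHom.ofInjective hι
  let u' : B →+ ι.range := u.codRestrict ι.range fun b => (hιq (u b)).mp (DFunLike.congr_fun hu b)
  exact ⟨e.symm.toAddMonoidHom.comp u',
    AddMonoidHom.ext fun b => congrArg Subtype.val (e.apply_symm_apply (u' b))⟩

section EilenbergMap

variable {G A B I H : Type} [AddCommGroup G] [AddCommGroup A] [AddCommGroup B] [AddCommGroup I]
  [AddCommGroup H] {Gs : ℕ → AddSubgroup G} {hmono : Monotone Gs}

variable (Gs) in
/-- The map `Hom(G, A) → ∏_i Hom(G_i, A)`, `F ↦ (F|G_i)_i`. -/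
def restrictHom : (G →+ A) →+ ∀ i, Gs i →+ A :=
  AddMonoidHom.mk' (fun F i => F.comp (Gs i).subtype) fun _ _ => rfl

variable (Gs) in
/-- The map `∏_i Hom(G_i, A) → ∏_i Hom(G_i, B)` induced by `φ : A → B`. -/
def postcompHom (φ : A →+ B) : (∀ i, Gs i →+ A) →+ ∀ i, Gs i →+ B :=
  AddMonoidHom.mk' (fun f i => φ.comp (f i)) fun f g => funext fun i => φ.comp_add (f i) (g i)

theorem postcompHom_restrictHom (φ : A →+ B) (F : G →+ A) :
    postcompHom Gs φ (restrictHom Gs F) = restrictHom Gs (φ.comp F) := rfl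

theorem restrictHom_injective (hunion : ∀ x : G, ∃ i, x ∈ Gs i) :
    Function.Injective (restrictHom (A := A) Gs) := fun F F' h =>
  AddMonoidHom.ext fun x => by
    obtain ⟨i, hi⟩ := hunion x
    exact DFunLike.congr_fun (congrFun h i) ⟨x, hi⟩

theorem eilenberg_postcompHom (φ : A →+ B) (f : ∀ i, Gs i →+ A) :
    eilenberg G B Gs hmono (postcompHom Gs φ f) = postcompHom Gs φ (eilenberg G A Gs hmono f) :=
  funext fun i => AddMonoidHom.ext fun x => (map_sub φ (f i x) _).symm

theorem eilenberg_restrictHom (F : G →+ A) : eilenberg G A Gs hmono (restrictHom Gs F) = 0 :=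
  funext fun _ => AddMonoidHom.ext fun x => sub_self (F x)

theorem apply_eq_apply_of_eilenberg_eq_zero {f : ∀ i, Gs i →+ A}
    (hf : eilenberg G A Gs hmono f = 0) {i j : ℕ} {x : G} (hi : x ∈ Gs i) (hj : x ∈ Gs j) :
    f i ⟨x, hi⟩ = f j ⟨x, hj⟩ := by
  have hstep (k : ℕ) (hk : x ∈ Gs k) : f k ⟨x, hk⟩ = f (k + 1) ⟨x, hmono k.le_succ hk⟩ :=
    sub_eq_zero.mp (DFunLike.congr_fun (congrFun hf k) ⟨x, hk⟩)
  wlog hij : i ≤ j generalizing i j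
  · exact (this hj hi (le_of_not_ge hij)).symm
  induction j, hij using Nat.le_induction with
  | base => rfl
  | succ j hij ih => exact (ih (hmono hij hi)).trans (hstep j _)

theorem exists_restrictHom_eq (hunion : ∀ x : G, ∃ i, x ∈ Gs i) {f : ∀ i, Gs i →+ A}
    (hf : eilenberg G A Gs hmono f = 0) : ∃ F : G →+ A, restrictHom Gs F = f := by
  choose idx hidx using hunion
  refine ⟨AddMonoidHom.mk' (fun x => f (idx x) ⟨x, hidx x⟩) fun x y => ?_,
    funext fun i => AddMonoidHom.ext fun x => apply_eq_apply_of_eilenberg_eq_zero hf _ x.2⟩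
  have hx := hmono (le_max_left (idx x) (idx y)) (hidx x)
  have hy := hmono (le_max_right (idx x) (idx y)) (hidx y)
  rw [apply_eq_apply_of_eilenberg_eq_zero hf _ hx, apply_eq_apply_of_eilenberg_eq_zero hf _ hy,
    apply_eq_apply_of_eilenberg_eq_zero hf _ (add_mem hx hy), ← map_add]
  rfl

theorem eilenberg_surjective [DivisibleBy I ℤ] :
    Function.Surjective (eilenberg G I Gs hmono) := fun g => by
  have hextend (i : ℕ) (w : Gs i →+ I) : ∃ w' : Gs (i + 1) →+ I,
      w'.comp (AddSubgroup.inclusion (hmono i.le_succ)) = w :=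
    Module.Baer.extension_property_addMonoidHom (Module.Baer.of_divisible I) _
      (AddSubgroup.inclusion_injective _) w
  choose extend hextend using hextend
  let u : ∀ i, Gs i →+ I := Nat.rec 0 fun i ui => extend i (ui - g i)
  refine ⟨u, funext fun i => ?_⟩
  change u i - (extend i (u i - g i)).comp _ = g i
  rw [hextend, sub_sub_cancel]

theorem postcompHom_postcompHom_eq_zero {ι : H →+ I} {q : I →+ A} (hιq : Function.Exact ι q)
    (h : ∀ i, Gs i →+ H) : postcompHom Gs q (postcompHom Gs ι h) = 0 :=
  funext fun i => AddMonoidHom.ext fun x => hιq.apply_apply_eq_zero (h i x)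

theorem postcompHom_exact {ι : H →+ I} {q : I →+ A} (hι : Function.Injective ι)
    (hιq : Function.Exact ι q) : Function.Exact (postcompHom Gs ι) (postcompHom Gs q) := fun u => by
  constructor
  · intro hu
    choose h hh using fun i => exists_comp_eq_of_comp_eq_zero hι hιq (congrFun hu i)
    exact ⟨h, funext hh⟩
  · rintro ⟨h, rfl⟩
    exact postcompHom_postcompHom_eq_zero hιq h

theorem postcompHom_injective {φ : A →+ B} (hφ : Function.Injective φ) :
    Function.Injective (postcompHom Gs φ) := fun _ _ h =>
  funext fun i => AddMonoidHom.ext fun x => hφ (DFunLike.congr_fun (congrFun h i) x)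

end EilenbergMap

section Comparison

variable {G H I Q : Type} [AddCommGroup G] [AddCommGroup H] [AddCommGroup I] [AddCommGroup Q]

theorem apply_mem_Pext1_iff {δ : (G →+ Q) →+ Ext1 G H} (hδ : Function.Surjective δ) {q : I →+ Q}
    (hδ₀ : ∀ f, δ f = 0 ↔ ∃ l : G →+ I, q.comp l = f) (f : G →+ Q) :
    δ f ∈ Pext1 G H ↔ IsDivisibleModulo q f := by
  simp only [Pext1, AddSubgroup.mem_iInf, AddMonoidHom.mem_range, IsDivisibleModulo]
  refine forall₂_congr fun n _ => hδ.exists.trans (exists_congr fun g => ?_)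
  have hsub : n • δ g = δ f ↔ δ (f - n • g) = 0 := by
    rw [map_sub, map_nsmul, sub_eq_zero, eq_comm]
  refine hsub.trans ((hδ₀ _).trans (exists_congr fun l => ?_))
  rw [eq_sub_iff_add_eq', eq_comm]

variable {Gs : ℕ → AddSubgroup G} {hmono : Monotone Gs} {ι : H →+ I} {q : I →+ Q}

variable (Gs hmono ι q) in
/-- The triples `(f, u, g)` consisting of a homomorphism `f : G → Q`, lifts `uᵢ : Gᵢ → I` of the
restrictions of `f` along `q`, and the homomorphisms `gᵢ : Gᵢ → H` measuring the failure of the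
`uᵢ` to be compatible. -/
def liftTriples : AddSubgroup ((G →+ Q) × (∀ i, Gs i →+ I) × (∀ i, Gs i →+ H)) where
  carrier := {w | postcompHom Gs q w.2.1 = restrictHom Gs w.1 ∧
    eilenberg G I Gs hmono w.2.1 = postcompHom Gs ι w.2.2}
  zero_mem' := by simp
  add_mem' := fun ⟨h₁, h₂⟩ ⟨h₁', h₂'⟩ => by simp [h₁, h₂, h₁', h₂']
  neg_mem' := fun ⟨h₁, h₂⟩ => by simp [h₁, h₂]

theorem exists_liftTriple_of_lifts (hι : Function.Injective ι) (hιq : Function.Exact ι q)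
    {f : G →+ Q} {u : ∀ i, Gs i →+ I} (hu : postcompHom Gs q u = restrictHom Gs f) :
    ∃ g, (f, u, g) ∈ liftTriples Gs hmono ι q := by
  have hΨu : postcompHom Gs q (eilenberg G I Gs hmono u) = 0 := by
    rw [← eilenberg_postcompHom, hu, eilenberg_restrictHom]
  obtain ⟨g, hg⟩ := (postcompHom_exact hι hιq _).mp hΨu
  exact ⟨g, hu, hg.symm⟩

theorem exists_liftTriple_of_obstruction [DivisibleBy I ℤ] (hιq : Function.Exact ι q)
    (hunion : ∀ x : G, ∃ i, x ∈ Gs i) (g : ∀ i, Gs i →+ H) :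
    ∃ f u, (f, u, g) ∈ liftTriples Gs hmono ι q := by
  obtain ⟨u, hu⟩ := eilenberg_surjective (hmono := hmono) (postcompHom Gs ι g)
  have hΨqu : eilenberg G Q Gs hmono (postcompHom Gs q u) = 0 := by
    rw [eilenberg_postcompHom, hu, postcompHom_postcompHom_eq_zero hιq]
  obtain ⟨f, hf⟩ := exists_restrictHom_eq hunion hΨqu
  exact ⟨f, u, hf.symm, hu⟩

theorem exists_lift_iff_mem_range_eilenberg (hι : Function.Injective ι)
    (hιq : Function.Exact ι q) (hunion : ∀ x : G, ∃ i, x ∈ Gs i) {f : G →+ Q}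
    {u : ∀ i, Gs i →+ I} {g : ∀ i, Gs i →+ H} (hw : (f, u, g) ∈ liftTriples Gs hmono ι q) :
    (∃ l : G →+ I, q.comp l = f) ↔ g ∈ (eilenberg G H Gs hmono).range := by
  obtain ⟨hu : postcompHom Gs q u = restrictHom Gs f,
    hg : eilenberg G I Gs hmono u = postcompHom Gs ι g⟩ := hw
  constructor
  · rintro ⟨l, rfl⟩
    have hdiff : postcompHom Gs q (u - restrictHom Gs l) = 0 := by
      rw [map_sub, hu, postcompHom_restrictHom, sub_self]
    obtain ⟨h, hh⟩ := (postcompHom_exact hι hιq _).mp hdiff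
    refine ⟨h, postcompHom_injective hι ?_⟩
    rw [← eilenberg_postcompHom, hh, map_sub, eilenberg_restrictHom, sub_zero, hg]
  · rintro ⟨h, rfl⟩
    have hdiff : eilenberg G I Gs hmono (u - postcompHom Gs ι h) = 0 := by
      rw [map_sub, hg, eilenberg_postcompHom, sub_self]
    obtain ⟨l, hl⟩ := exists_restrictHom_eq hunion hdiff
    refine ⟨l, restrictHom_injective hunion ?_⟩
    rw [← postcompHom_restrictHom, hl, map_sub, hu,
      postcompHom_postcompHom_eq_zero hιq, sub_zero]

theorem liftsOnCyclics_of_lifts (hunion : ∀ x : G, ∃ i, x ∈ Gs i) {f : G →+ Q}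
    {u : ∀ i, Gs i →+ I} (hu : postcompHom Gs q u = restrictHom Gs f) : LiftsOnCyclics q f :=
  fun x => by
    obtain ⟨i, hi⟩ := hunion x
    refine ⟨u i ⟨x, hi⟩, DFunLike.congr_fun (congrFun hu i) ⟨x, hi⟩, fun n hn => ?_⟩
    rw [← map_zsmul, show n • (⟨x, hi⟩ : Gs i) = 0 from Subtype.ext hn, map_zero]

theorem IsDivisibleModulo.exists_lifts (hq : Function.Surjective q) (hfg : ∀ i, (Gs i).FG)
    {f : G →+ Q} (hf : IsDivisibleModulo q f) :
    ∃ u : ∀ i, Gs i →+ I, postcompHom Gs q u = restrictHom Gs f := by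
  have hfinite (i : ℕ) : Module.Finite ℤ (Gs i) :=
    Module.Finite.iff_addGroup_fg.mpr ((AddGroup.fg_iff_addSubgroup_fg _).mpr (hfg i))
  choose u hu using fun i => (hf.comp (Gs i).subtype).exists_lift hq
  exact ⟨u, funext hu⟩

theorem nonempty_Pext1_addEquiv [DivisibleBy I ℤ] [DivisibleBy Q ℤ] (hι : Function.Injective ι)
    (hιq : Function.Exact ι q) (hq : Function.Surjective q) (hfg : ∀ i, (Gs i).FG)
    (hunion : ∀ x : G, ∃ i, x ∈ Gs i) :
    Nonempty (Pext1 G H ≃+ (∀ i, Gs i →+ H) ⧸ (eilenberg G H Gs hmono).range) := by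
  obtain ⟨δ, hδ, hδ₀⟩ := exists_surjective_toExt1 (G := G) hι hιq hq
  let T := liftTriples Gs hmono ι q
  let toPext1 : T →+ Pext1 G H :=
    (δ.comp ((AddMonoidHom.fst _ _).comp T.subtype)).codRestrict _ fun w =>
      (apply_mem_Pext1_iff hδ hδ₀ _).mpr (liftsOnCyclics_of_lifts hunion w.2.1).isDivisibleModulo
  let toLim1 : T →+ (∀ i, Gs i →+ H) ⧸ (eilenberg G H Gs hmono).range :=
    (QuotientAddGroup.mk' _).comp
      ((AddMonoidHom.snd _ _).comp ((AddMonoidHom.snd _ _).comp T.subtype))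
  have hPext1 : Function.Surjective toPext1 := fun ⟨e, he⟩ => by
    obtain ⟨f, rfl⟩ := hδ e
    obtain ⟨u, hu⟩ := ((apply_mem_Pext1_iff hδ hδ₀ f).mp he).exists_lifts hq hfg
    obtain ⟨g, hw⟩ := exists_liftTriple_of_lifts (hmono := hmono) hι hιq hu
    exact ⟨⟨_, hw⟩, rfl⟩
  have hLim1 : Function.Surjective toLim1 := fun c => by
    obtain ⟨g, rfl⟩ := QuotientAddGroup.mk'_surjective _ c
    obtain ⟨f, u, hw⟩ := exists_liftTriple_of_obstruction (hmono := hmono) hιq hunion g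
    exact ⟨⟨_, hw⟩, rfl⟩
  have hker : toPext1.ker = toLim1.ker := AddSubgroup.ext fun w =>
    Subtype.ext_iff.trans <| (hδ₀ w.1.1).trans <|
      (exists_lift_iff_mem_range_eilenberg hι hιq hunion w.2).trans
        (QuotientAddGroup.eq_zero_iff _).symm
  exact ⟨addEquivOfKerEq hPext1 hLim1 hker⟩

end Comparison

theorem exists_injective_divisible.{u} (H : Type u) [AddCommGroup H] :
    ∃ (I : Type u) (_ : AddCommGroup I) (_ : DivisibleBy I ℤ) (ι : H →+ I),
      Function.Injective ι := by
  refine ⟨CharacterModule H → AddCircle (1 : ℚ), inferInstance, inferInstance,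
    AddMonoidHom.pi fun χ => χ, (injective_iff_map_eq_zero _).mpr fun h hh => ?_⟩
  exact CharacterModule.eq_zero_of_character_apply fun χ => congrFun hh χ

/-- Jensen's theorem: for a countable abelian group `G` written as the union of
an increasing sequence of finitely generated subgroups `G_i`, and any abelian group `H`,
`Pext¹(G,H) ≅ lim¹ Hom(G_i,H)`, the latter being the cokernel of the Eilenberg map. -/
theorem jensen_pext_iso_lim1 (G H : Type) [AddCommGroup G] [AddCommGroup H] [Countable G]
    (Gs : ℕ → AddSubgroup G) (hmono : Monotone Gs) (hfg : ∀ i, (Gs i).FG)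
    (hunion : ∀ x : G, ∃ i, x ∈ Gs i) :
    Nonempty ((Pext1 G H) ≃+
      ((∀ i, ↥(Gs i) →+ H) ⧸ (eilenberg G H Gs hmono).range)) := by
  obtain ⟨I, _, _, ι, hι⟩ := exists_injective_divisible H
  let q := QuotientAddGroup.mk' ι.range
  have hq : Function.Surjective q := QuotientAddGroup.mk'_surjective _
  have hιq : Function.Exact ι q := fun x => QuotientAddGroup.eq_zero_iff x
  let _ : DivisibleBy (I ⧸ ι.range) ℤ := hq.divisibleBy q fun x n => map_zsmul q n x
  exact nonempty_Pext1_addEquiv hι hιq hq hfg hunion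
end

section
/- A short exact sequence of abelian groups 0 → H → E → G → 0 is pure if and only if its extension class in Ext¹(G,H) lies in n·Ext¹(G,H) for every integer n ≥ 1, i.e. lies in Pext¹(G,H). -/
open CategoryTheory

noncomputable instance : HasDerivedCategory.{1} (ModuleCat.{0} ℤ) :=
  HasDerivedCategory.standard _

instance : HasExt.{1} (ModuleCat.{0} ℤ) :=
  hasExt_of_hasDerivedCategory _

/-!
Multiplication by `r` on `Ext¹(G, H)` is pullback along `r : G → G`. Over a principal ideal domain
`Ext²` vanishes, so an extension class is divisible by `r` exactly when its pullback to the
`r`-torsion `G[r]` is zero, that is, when the inclusion `G[r] → G` lifts to `E`.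

Lifts for all `r ≠ 0` give purity elementwise. Conversely, if `E → G` has pure kernel, then every
map to `G` from a module `M` killed by some `r ≠ 0` lifts to `E`. Indeed, let a lift be given on a
pure submodule `N ≠ M`. An element of maximal order in `M ⧸ N` generates a pure submodule and is
represented by some `x` of the same order, so that `N + Rx` is a direct sum and again pure. The
image of `x` in `G` has a preimage in `E` killed by the order of `x`, which extends the lift to
`N ⊕ Rx`. Zorn's lemma finishes the argument.
-/

universe u v w

section Purity

variable {R : Type*} [CommRing R] {M : Type*} [AddCommGroup M] [Module R M]

/-- A submodule `N` of `M` is *relatively divisible* (RD-pure) if `N ∩ rM = rN` for every scalar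
`r`. Over a principal ideal domain this is purity in the usual sense. Only the inclusion
`N ∩ rM ⊆ rN` is recorded, since the other one always holds. -/
def IsRDPure (N : Submodule R M) : Prop :=
  ∀ (r : R) (x : M), r • x ∈ N → ∃ y ∈ N, r • y = r • x

theorem isRDPure_iff_forall_ne_zero {N : Submodule R M} :
    IsRDPure N ↔ ∀ r : R, r ≠ 0 → ∀ x : M, r • x ∈ N → ∃ y ∈ N, r • y = r • x := by
  refine ⟨fun h r _ ↦ h r, fun h r x hx ↦ ?_⟩
  obtain rfl | hr := eq_or_ne r 0
  · exact ⟨0, zero_mem N, by rw [zero_smul, zero_smul]⟩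
  · exact h r hr x hx

theorem isRDPure_bot : IsRDPure (⊥ : Submodule R M) := fun _ _ hx ↦
  ⟨0, zero_mem _, by rw [smul_zero, (Submodule.mem_bot R).1 hx]⟩

theorem isRDPure_sSup_of_directedOn {c : Set (Submodule R M)} (hne : c.Nonempty)
    (hdir : DirectedOn (· ≤ ·) c) (hc : ∀ N ∈ c, IsRDPure N) : IsRDPure (sSup c) := by
  intro r x hx
  obtain ⟨N, hN, hxN⟩ := (Submodule.mem_sSup_of_directed hne hdir).1 hx
  obtain ⟨y, hy, hyx⟩ := hc N hN r x hxN
  exact ⟨y, le_sSup hN hy, hyx⟩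

theorem IsRDPure.comap_mkQ {N : Submodule R M} (hN : IsRDPure N) {P : Submodule R (M ⧸ N)}
    (hP : IsRDPure P) : IsRDPure (P.comap N.mkQ) := by
  intro r x hx
  obtain ⟨z, hz, hzx⟩ := hP r (N.mkQ x) (by simpa using hx)
  obtain ⟨p, rfl⟩ := N.mkQ_surjective z
  have hdiff : r • (x - p) ∈ N := by
    rw [← N.ker_mkQ, LinearMap.mem_ker, map_smul, map_sub, smul_sub, hzx, sub_self]
  obtain ⟨y, hy, hyx⟩ := hN r (x - p) hdiff
  refine ⟨y + p, ?_, by rw [smul_add, hyx, smul_sub, sub_add_cancel]⟩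
  have hy0 : N.mkQ y = 0 := by simpa using hy
  rwa [Submodule.mem_comap, map_add, hy0, zero_add]

theorem IsRDPure.exists_lift_smul_eq_zero {P : Type*} [AddCommGroup P] [Module R P] {g : M →ₗ[R] P}
    (hker : IsRDPure (LinearMap.ker g)) (hg : Function.Surjective g) {r : R} {z : P}
    (hz : r • z = 0) : ∃ x, g x = z ∧ r • x = 0 := by
  obtain ⟨x, rfl⟩ := hg z
  obtain ⟨y, hy, hyx⟩ := hker r x (by rwa [LinearMap.mem_ker, map_smul])
  exact ⟨x - y, by rw [map_sub, LinearMap.mem_ker.1 hy, sub_zero],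
    by rw [smul_sub, hyx, sub_self]⟩

theorem IsRDPure.exists_lift_torsionOf_le [IsPrincipalIdealRing R] {P : Type*} [AddCommGroup P]
    [Module R P] {g : M →ₗ[R] P} (hker : IsRDPure (LinearMap.ker g))
    (hg : Function.Surjective g) {I : Ideal R} {z : P} (hI : I ≤ Ideal.torsionOf R P z) :
    ∃ x, g x = z ∧ I ≤ Ideal.torsionOf R M x := by
  obtain ⟨c, rfl⟩ := IsPrincipalIdealRing.principal I
  simp only [Ideal.submodule_span_eq, Ideal.span_singleton_le_iff_mem,
    Ideal.mem_torsionOf_iff] at hI ⊢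
  exact hker.exists_lift_smul_eq_zero hg hI

variable {E G : Type*} [AddCommGroup E] [Module R E] [AddCommGroup G] [Module R G]

/-- A linear lift of `k : M → G` along `g : E → G`, defined on a relatively divisible submodule
of `M`. -/
structure IsPureLift (g : E →ₗ[R] G) (k : M →ₗ[R] G) (f : M →ₗ.[R] E) : Prop where
  isRDPure_domain : IsRDPure f.domain
  map_apply : ∀ x : f.domain, g (f x) = k x

theorem isPureLift_bot (g : E →ₗ[R] G) (k : M →ₗ[R] G) : IsPureLift g k ⊥ where
  isRDPure_domain := isRDPure_bot
  map_apply x := by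
    have hx : x = 0 := Subsingleton.elim (α := (⊥ : Submodule R M)) _ _
    rw [hx, LinearPMap.map_zero, map_zero, ZeroMemClass.coe_zero, map_zero]

theorem isPureLift_sSup {g : E →ₗ[R] G} {k : M →ₗ[R] G} {c : Set (M →ₗ.[R] E)}
    (hne : c.Nonempty) (hdir : DirectedOn (· ≤ ·) c) (hc : ∀ f ∈ c, IsPureLift g k f) :
    IsPureLift g k (LinearPMap.sSup c hdir) where
  isRDPure_domain := isRDPure_sSup_of_directedOn (hne.image _)
    (hdir.mono_comp LinearPMap.domain_mono.monotone) <| by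
      rintro _ ⟨f, hf, rfl⟩
      exact (hc f hf).isRDPure_domain
  map_apply x := by
    obtain ⟨f, hf, hxf⟩ := (LinearPMap.mem_domain_sSup_iff hne hdir).1 x.2
    rw [← (LinearPMap.le_sSup hdir hf).2 (x := ⟨x, hxf⟩) rfl]
    exact (hc f hf).map_apply ⟨x, hxf⟩

end Purity

section Bounded

theorem exists_minimal_ideal_of_forall_le {R : Type*} [CommRing R] [IsDedekindDomain R]
    {s : Set (Ideal R)} (hs : s.Nonempty) {I₀ : Ideal R} (hI₀ : I₀ ≠ ⊥) (h : ∀ I ∈ s, I₀ ≤ I) :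
    ∃ I, Minimal (· ∈ s) I := by
  -- A maximal cofactor `J` in `I * J = I₀` belongs to a minimal `I`.
  have hcofactor : {J : Ideal R | ∃ I ∈ s, I * J = I₀}.Nonempty := by
    obtain ⟨I, hI⟩ := hs
    obtain ⟨J, hJ⟩ := Ideal.dvd_iff_le.2 (h I hI)
    exact ⟨J, I, hI, hJ.symm⟩
  obtain ⟨J, ⟨I, hI, hIJ⟩, hmax⟩ :=
    set_has_maximal_iff_noetherian.2 (inferInstanceAs (IsNoetherian R R)) _ hcofactor
  have hI0 : I ≠ 0 := fun h0 ↦ hI₀ (by rw [← hIJ, h0, zero_mul]; rfl)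
  have hJ0 : J ≠ 0 := fun h0 ↦ hI₀ (by rw [← hIJ, h0, mul_zero]; rfl)
  refine ⟨I, hI, fun I' hI' hle ↦ ?_⟩
  obtain ⟨J', hJ'⟩ := Ideal.dvd_iff_le.2 (h I' hI')
  obtain ⟨K, rfl⟩ := Ideal.dvd_iff_le.2 hle
  have hJK : J = K * J' := mul_left_cancel₀ hI0 (by rw [hIJ, hJ', mul_assoc])
  have hJJ' : J = J' := eq_of_le_of_not_lt (hJK ▸ Ideal.mul_le_right) (hmax J' ⟨_, hI', hJ'.symm⟩)
  exact (mul_right_cancel₀ hJ0 (by rw [hIJ, hJ', hJJ'])).le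

variable {R : Type*} [CommRing R] [IsDomain R] [IsPrincipalIdealRing R]
  {M : Type*} [AddCommGroup M] [Module R M]

open Ideal in
theorem exists_torsionOf_eq_annihilator (hM : Module.annihilator R M ≠ ⊥) :
    ∃ x : M, torsionOf R M x = Module.annihilator R M := by
  have hle (x : M) : Module.annihilator R M ≤ torsionOf R M x := fun r hr ↦
    Module.mem_annihilator.1 hr x
  obtain ⟨_, ⟨x, rfl⟩, hmin⟩ := exists_minimal_ideal_of_forall_le
    (Set.range_nonempty (torsionOf R M)) hM (by rintro _ ⟨x, rfl⟩; exact hle x)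
  refine ⟨x, le_antisymm (fun r hr ↦ Module.mem_annihilator.2 fun y ↦ ?_) (hle x)⟩
  let N : Submodule R M := Submodule.span R {x, y}
  have : Module.Finite R N := Module.Finite.span_of_finite R (by simp)
  obtain ⟨z, hz⟩ := Module.exists_ker_toSpanSingleton_eq_annihilator (R := R) (M := N)
  have hzN : torsionOf R M z = N.annihilator := by
    refine Eq.trans ?_ hz
    ext s
    simp [Subtype.ext_iff]
  have hxN : N.annihilator ≤ torsionOf R M x := fun s hs ↦
    Submodule.mem_annihilator.1 hs x (Submodule.subset_span (by simp))
  have hrN : r ∈ N.annihilator := hzN ▸ hmin ⟨(z : M), rfl⟩ (hzN ▸ hxN) hr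
  exact Submodule.mem_annihilator.1 hrN y (Submodule.subset_span (by simp))

theorem isRDPure_span_singleton_of_torsionOf_eq_annihilator {x : M}
    (hM : Module.annihilator R M ≠ ⊥) (hx : Ideal.torsionOf R M x = Module.annihilator R M) :
    IsRDPure (R ∙ x) := by
  intro r y hry
  obtain ⟨t, ht⟩ := Submodule.mem_span_singleton.1 hry
  obtain ⟨c, hc⟩ := IsPrincipalIdealRing.principal (Module.annihilator R M)
  rw [Ideal.submodule_span_eq] at hc
  have hc0 : c ≠ 0 := by
    rintro rfl
    exact hM (by simpa using hc)
  obtain ⟨d, hd⟩ := IsPrincipalIdealRing.principal (Ideal.span {r, c})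
  rw [Ideal.submodule_span_eq] at hd
  obtain ⟨r', rfl⟩ : d ∣ r := Ideal.mem_span_singleton.1 (hd ▸ Ideal.subset_span (by simp))
  obtain ⟨q, rfl⟩ : d ∣ c := Ideal.mem_span_singleton.1 (hd ▸ Ideal.subset_span (by simp))
  have hqt : q * t ∈ Ideal.torsionOf R M x := by
    have hcy : (d * q) • y = 0 :=
      Module.mem_annihilator.1 (hc ▸ Ideal.mem_span_singleton_self _) y
    calc (q * t) • x = r' • (d * q) • y := by rw [mul_smul, ht]; module
      _ = 0 := by rw [hcy, smul_zero]
  have hdt : d ∣ t := by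
    rw [hx, hc, Ideal.mem_span_singleton, mul_comm d] at hqt
    exact (mul_dvd_mul_iff_left (right_ne_zero_of_mul hc0)).1 hqt
  obtain ⟨u, v, huv⟩ := Ideal.mem_span_pair.1 (hd ▸ Ideal.mem_span_singleton.2 hdt)
  have hcx : (d * q) • x = 0 := Module.mem_annihilator.1 (hc ▸ Ideal.mem_span_singleton_self _) x
  refine ⟨u • x, Submodule.smul_mem _ _ (Submodule.mem_span_singleton_self x), ?_⟩
  calc (d * r') • u • x = (u * (d * r')) • x + v • (d * q) • x := by rw [hcx]; module
    _ = t • x := by rw [← huv]; module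
    _ = (d * r') • y := ht

theorem IsRDPure.exists_disjoint_isRDPure_sup_span_singleton (hM : Module.annihilator R M ≠ ⊥)
    {N : Submodule R M} (hN : IsRDPure N) (hNtop : N ≠ ⊤) :
    ∃ x ∉ N, Disjoint N (R ∙ x) ∧ IsRDPure (N ⊔ R ∙ x) := by
  have hbdd : Module.annihilator R (M ⧸ N) ≠ ⊥ :=
    ne_bot_of_le_ne_bot hM (N.mkQ.annihilator_le_of_surjective N.mkQ_surjective)
  obtain ⟨z, hz⟩ := exists_torsionOf_eq_annihilator hbdd
  obtain ⟨x, rfl, hzx⟩ := IsRDPure.exists_lift_torsionOf_le (g := N.mkQ) (by rwa [N.ker_mkQ])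
    N.mkQ_surjective (z := z) le_rfl
  refine ⟨x, fun hxN ↦ ?_, ?_, ?_⟩
  · have hx0 : N.mkQ x = 0 := by simpa using hxN
    rw [hx0, Ideal.torsionOf_zero, eq_comm, Module.annihilator_eq_top_iff,
      Submodule.Quotient.subsingleton_iff] at hz
    exact hNtop hz
  · refine Submodule.disjoint_def.2 fun y hyN hyx ↦ ?_
    obtain ⟨t, rfl⟩ := Submodule.mem_span_singleton.1 hyx
    have ht : t • N.mkQ x = 0 := by
      rwa [← map_smul, ← LinearMap.mem_ker, N.ker_mkQ]
    exact hzx ht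
  · have hsup : (R ∙ N.mkQ x).comap N.mkQ = N ⊔ R ∙ x := by
      rw [← Set.image_singleton, ← Submodule.map_span, Submodule.comap_map_mkQ]
    exact hsup ▸ hN.comap_mkQ (isRDPure_span_singleton_of_torsionOf_eq_annihilator hbdd hz)

variable {E G : Type*} [AddCommGroup E] [Module R E] [AddCommGroup G] [Module R G]

theorem IsPureLift.exists_extension (hM : Module.annihilator R M ≠ ⊥) {g : E →ₗ[R] G}
    (hker : IsRDPure (LinearMap.ker g)) (hg : Function.Surjective g) {k : M →ₗ[R] G}
    {f : M →ₗ.[R] E} (hf : IsPureLift g k f) (hdom : f.domain ≠ ⊤) :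
    ∃ f', IsPureLift g k f' ∧ f < f' := by
  obtain ⟨x, hx, hdisj, hpure⟩ :=
    hf.isRDPure_domain.exists_disjoint_isRDPure_sup_span_singleton hM hdom
  obtain ⟨e, hge, hxe⟩ := hker.exists_lift_torsionOf_le hg (I := Ideal.torsionOf R M x) (z := k x)
    fun r (hr : r • x = 0) ↦ show r • k x = 0 by rw [← map_smul, hr, map_zero]
  let fx : M →ₗ.[R] E := LinearPMap.mkSpanSingleton' x e hxe
  have hagree := LinearPMap.sup_h_of_disjoint f fx hdisj
  refine ⟨f.sup fx hagree, ⟨hpure, ?_⟩, f.left_le_sup fx hagree, fun hle ↦ ?_⟩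
  · rintro ⟨m, hm⟩
    obtain ⟨y, hy, z, hz, rfl⟩ := Submodule.mem_sup.1 hm
    obtain ⟨t, rfl⟩ := Submodule.mem_span_singleton.1 hz
    refine (congrArg g (LinearPMap.sup_apply hagree ⟨y, hy⟩ ⟨t • x, hz⟩ ⟨y + t • x, hm⟩
      rfl)).trans ?_
    have hfx : fx ⟨t • x, hz⟩ = t • e := LinearPMap.mkSpanSingleton'_apply ..
    rw [map_add, hf.map_apply, hfx, map_smul, hge, map_add, map_smul]
  · exact hx (hle.1 (Submodule.mem_sup_right (Submodule.mem_span_singleton_self x)))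

theorem exists_lift_of_isRDPure_ker (hM : Module.annihilator R M ≠ ⊥) {g : E →ₗ[R] G}
    (hker : IsRDPure (LinearMap.ker g)) (hg : Function.Surjective g) (k : M →ₗ[R] G) :
    ∃ s : M →ₗ[R] E, g ∘ₗ s = k := by
  obtain ⟨f, -, hf⟩ := zorn_le_nonempty₀ {f | IsPureLift g k f}
    (fun c hc hchain f hfc ↦ ⟨LinearPMap.sSup c hchain.directedOn,
      isPureLift_sSup ⟨f, hfc⟩ hchain.directedOn hc, fun _ ↦ LinearPMap.le_sSup _⟩)
    ⊥ (isPureLift_bot g k)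
  have hdom : f.domain = ⊤ := by
    by_contra hdom
    obtain ⟨f', hf', hlt⟩ := hf.prop.exists_extension hM hker hg hdom
    exact hf.not_gt hf' hlt
  refine ⟨f.toFun ∘ₗ (LinearEquiv.ofTop _ hdom).symm.toLinearMap, ?_⟩
  ext x
  exact hf.prop.map_apply _

theorem isRDPure_ker_iff_forall_torsionBy_lift {g : E →ₗ[R] G} (hg : Function.Surjective g) :
    IsRDPure (LinearMap.ker g) ↔ ∀ r : R, r ≠ 0 →
      ∃ s : Submodule.torsionBy R G r →ₗ[R] E, g ∘ₗ s = (Submodule.torsionBy R G r).subtype := by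
  constructor
  · intro hker r hr
    have hmem : r ∈ Module.annihilator R (Submodule.torsionBy R G r) :=
      Module.mem_annihilator.2 fun x ↦ Submodule.smul_torsionBy r x
    exact exists_lift_of_isRDPure_ker (Submodule.ne_bot_iff _ |>.2 ⟨r, hmem, hr⟩) hker hg _
  · intro hlift
    refine isRDPure_iff_forall_ne_zero.2 fun r hr e he ↦ ?_
    obtain ⟨s, hs⟩ := hlift r hr
    let z : Submodule.torsionBy R G r := ⟨g e, by simpa using he⟩
    have hgs : g (s z) = g e := LinearMap.congr_fun hs z
    have hrs : r • s z = 0 := by rw [← map_smul, Submodule.smul_torsionBy, map_zero]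
    exact ⟨e - s z, by rw [LinearMap.mem_ker, map_sub, hgs, sub_self],
      by rw [smul_sub, hrs, sub_zero]⟩

end Bounded

section Ext

open Abelian

variable {C : Type u} [Category.{v} C] [Abelian C] [HasExt.{w} C]

theorem mk₀_comp_eq_zero_iff_exists_of_exact {T : ShortComplex C} (hT : T.Exact) [Mono T.f]
    {Y : C} {n : ℕ} [HasInjectiveDimensionLE Y n] (x : Ext T.X₂ Y n) :
    (Ext.mk₀ T.f).comp x (zero_add n) = 0 ↔
      ∃ y : Ext T.X₃ Y n, (Ext.mk₀ T.g).comp y (zero_add n) = x := by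
  constructor
  · intro hx
    have hcoim : (ShortComplex.mk T.f (Abelian.coimage.π T.g)
        (Abelian.comp_coimage_π_eq_zero T.zero)).ShortExact :=
      { exact := T.exact_iff_exact_coimage_π.1 hT }
    have hcoker : (ShortComplex.mk (Abelian.factorThruCoimage T.g) _
        (Limits.cokernel.condition _)).ShortExact :=
      { exact := ShortComplex.exact_cokernel _ }
    obtain ⟨z, hz⟩ := Ext.contravariant_sequence_exact₂ hcoim Y x hx
    obtain ⟨y, hy⟩ := Ext.contravariant_sequence_exact₁ hcoker Y z rfl
      (Ext.eq_zero_of_hasInjectiveDimensionLT _ (n + 1) (by lia))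
    refine ⟨y, ?_⟩
    rw [← hz, ← hy, Ext.mk₀_comp_mk₀_assoc, Abelian.coimage.fac]
  · rintro ⟨y, rfl⟩
    rw [Ext.mk₀_comp_mk₀_assoc, T.zero, Ext.mk₀_zero, Ext.zero_comp]

theorem mk₀_comp_extClass_eq_zero_iff {S : ShortComplex C} (hS : S.ShortExact) {K : C}
    (k : K ⟶ S.X₃) :
    (Ext.mk₀ k).comp hS.extClass (zero_add 1) = 0 ↔ ∃ s : K ⟶ S.X₂, s ≫ S.g = k := by
  constructor
  · intro hk
    obtain ⟨x, hx⟩ := Ext.covariant_sequence_exact₃ K hS (Ext.mk₀ k) (zero_add 1) hk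
    obtain ⟨s, rfl⟩ := (Ext.mk₀_bijective _ _).2 x
    exact ⟨s, (Ext.mk₀_bijective _ _).1 (by rw [← Ext.mk₀_comp_mk₀, hx])⟩
  · rintro ⟨s, rfl⟩
    rw [← Ext.mk₀_comp_mk₀_assoc, hS.comp_extClass, Ext.comp_zero]

theorem smul_eq_mk₀_comp {R : Type*} [Ring R] [Linear R C] {X Y : C} {n : ℕ} (r : R)
    (x : Ext X Y n) : r • x = (Ext.mk₀ (r • 𝟙 X)).comp x (zero_add n) := by
  rw [Ext.mk₀_smul, Ext.smul_comp, Ext.mk₀_id_comp]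

end Ext

section ModuleCat

open Abelian

theorem baer_of_surjective {R : Type u} [Ring R] [∀ I : Ideal R, Module.Projective R I]
    {Q Q' : Type*} [AddCommGroup Q] [Module R Q] [AddCommGroup Q'] [Module R Q']
    (hQ : Module.Baer R Q) {p : Q →ₗ[R] Q'} (hp : Function.Surjective p) : Module.Baer R Q' := by
  intro I g
  obtain ⟨l, rfl⟩ := Module.projective_lifting_property p g hp
  obtain ⟨l', hl'⟩ := hQ I l
  exact ⟨p ∘ₗ l', fun x hx ↦ congrArg p (hl' x hx)⟩

theorem hasInjectiveDimensionLE_one {R : Type u} [Ring R] [Small.{v} R]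
    [∀ I : Ideal R, Module.Projective R I] (Y : ModuleCat.{v} R) :
    HasInjectiveDimensionLE Y 1 := by
  let S : ShortComplex (ModuleCat.{v} R) := .mk _ _ (Limits.cokernel.condition (Injective.ι Y))
  have hS : S.ShortExact := { exact := ShortComplex.exact_cokernel _ }
  have hX₂ : Injective S.X₂ := inferInstanceAs (Injective (Injective.under Y))
  have hX₃ : Module.Baer R S.X₃ := baer_of_surjective
    (.of_injective ((Module.injective_iff_injective_object R S.X₂).2 hX₂)) hS.surjective_g
  have hX₃' : Injective S.X₃ := (Module.injective_iff_injective_object R S.X₃).1 hX₃.injective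
  exact (hS.hasInjectiveDimensionLT_X₃_iff 0 hX₂).1 inferInstance

variable {R : Type u} [CommRing R] [Small.{v} R] [HasExt.{w} (ModuleCat.{v} R)]

theorem exists_smul_eq_extClass_iff [∀ I : Ideal R, Module.Projective R I]
    {S : ShortComplex (ModuleCat.{v} R)} (hS : S.ShortExact) (r : R) :
    (∃ y : Ext S.X₃ S.X₁ 1, r • y = hS.extClass) ↔
      ∃ s : Submodule.torsionBy R S.X₃ r →ₗ[R] S.X₂,
        S.g.hom ∘ₗ s = (Submodule.torsionBy R S.X₃ r).subtype := by
  let T : ShortComplex (ModuleCat.{v} R) :=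
    .mk (ModuleCat.ofHom (Submodule.torsionBy R S.X₃ r).subtype) (r • 𝟙 S.X₃) (by ext; simp)
  have hT : T.Exact := T.moduleCat_exact_iff.2 fun x hx ↦ ⟨⟨x, hx⟩, rfl⟩
  have : Mono T.f := (ModuleCat.mono_iff_injective _).2 Subtype.val_injective
  have := hasInjectiveDimensionLE_one S.X₁
  simp only [smul_eq_mk₀_comp]
  rw [← mk₀_comp_eq_zero_iff_exists_of_exact hT hS.extClass, mk₀_comp_extClass_eq_zero_iff]
  exact ⟨fun ⟨s, hs⟩ ↦ ⟨s.hom, congrArg ModuleCat.Hom.hom hs⟩,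
    fun ⟨s, hs⟩ ↦ ⟨ModuleCat.ofHom s, ModuleCat.hom_ext hs⟩⟩

theorem pure_iff_extClass_mem_pext_general [IsDomain R] [IsPrincipalIdealRing R]
    (S : ShortComplex (ModuleCat.{v} R)) (hS : S.ShortExact) :
    IsRDPure (LinearMap.range S.f.hom) ↔
      ∀ r : R, r ≠ 0 → ∃ y : Ext S.X₃ S.X₁ 1, r • y = hS.extClass := by
  rw [hS.exact.moduleCat_range_eq_ker,
    isRDPure_ker_iff_forall_torsionBy_lift hS.moduleCat_surjective_g]
  simp only [exists_smul_eq_extClass_iff]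

end ModuleCat

section NatCast

variable {R : Type u} [CommRing R] [CharZero R]

theorem forall_ne_zero_iff_forall_natCast (hR : ∀ r : R, ∃ n : ℕ, Associated (n : R) r)
    {p : R → Prop} (hp : ∀ r s, Associated r s → p r → p s) :
    (∀ r, r ≠ 0 → p r) ↔ ∀ n : ℕ, 0 < n → p n := by
  refine ⟨fun h n hn ↦ h n (Nat.cast_ne_zero.2 hn.ne'), fun h r hr ↦ ?_⟩
  obtain ⟨n, hnr⟩ := hR r
  have hn : n ≠ 0 := Nat.cast_ne_zero.1 (hnr.ne_zero_iff.2 hr)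
  exact hp n r hnr (h n hn.pos)

variable {M : Type*} [AddCommGroup M] [Module R M]

theorem forall_exists_smul_eq_iff_forall_nat
    (hR : ∀ r : R, ∃ n : ℕ, Associated (n : R) r) (x : M) :
    (∀ r : R, r ≠ 0 → ∃ y : M, r • y = x) ↔ ∀ n : ℕ, 0 < n → ∃ y : M, n • y = x := by
  simp only [← Nat.cast_smul_eq_nsmul R]
  refine forall_ne_zero_iff_forall_natCast hR ?_
  rintro r _ ⟨u, rfl⟩ ⟨y, hy⟩
  exact ⟨u⁻¹ • y, by rw [mul_smul, ← Units.smul_def, smul_inv_smul, hy]⟩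

theorem isRDPure_iff_forall_nat (hR : ∀ r : R, ∃ n : ℕ, Associated (n : R) r)
    {N : Submodule R M} :
    IsRDPure N ↔ ∀ n : ℕ, 0 < n → ∀ x : M, n • x ∈ N → ∃ y ∈ N, n • y = n • x := by
  simp only [← Nat.cast_smul_eq_nsmul R]
  rw [isRDPure_iff_forall_ne_zero]
  refine forall_ne_zero_iff_forall_natCast hR ?_
  rintro r _ ⟨u, rfl⟩ hr x hx
  rw [mul_smul, ← Units.smul_def] at hx ⊢
  obtain ⟨y, hy, hyx⟩ := hr (u • x) hx
  exact ⟨u⁻¹ • y, N.smul_mem _ hy, by rw [mul_smul, ← Units.smul_def, smul_inv_smul, hyx]⟩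

theorem isRDPure_range_iff_forall_nat (hR : ∀ r : R, ∃ n : ℕ, Associated (n : R) r)
    {P : Type*} [AddCommGroup P] [Module R P] (f : M →ₗ[R] P) :
    IsRDPure (LinearMap.range f) ↔ ∀ n : ℕ, 0 < n → ∀ x : P,
      ((x ∈ Set.range f ∧ ∃ e : P, n • e = x) ↔ ∃ y ∈ Set.range f, n • y = x) := by
  rw [isRDPure_iff_forall_nat hR]
  refine forall₂_congr fun n _ ↦ ⟨fun h x ↦ ⟨?_, ?_⟩, fun h x hx ↦ (h _).1 ⟨hx, x, rfl⟩⟩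
  · rintro ⟨hx, e, rfl⟩
    exact h e hx
  · rintro ⟨y, hy, rfl⟩
    exact ⟨nsmul_mem (show y ∈ LinearMap.range f from hy) n, y, rfl⟩

-- Stated in `ModuleCat R` because for `R = ℤ` instance search on `Ext` finds an action of `ℤ` other
-- than the one in `pure_iff_extClass_mem_pext_general`.
theorem forall_exists_smul_eq_ext_iff_forall_nat [HasExt.{w} (ModuleCat.{v} R)]
    (hR : ∀ r : R, ∃ n : ℕ, Associated (n : R) r) {X Y : ModuleCat.{v} R} {i : ℕ}
    (x : Abelian.Ext X Y i) :
    (∀ r : R, r ≠ 0 → ∃ y : Abelian.Ext X Y i, r • y = x) ↔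
      ∀ n : ℕ, 0 < n → ∃ y : Abelian.Ext X Y i, n • y = x :=
  forall_exists_smul_eq_iff_forall_nat hR x

end NatCast

/-- A short exact sequence `0 → H → E → G → 0` of abelian groups (ℤ-modules),
given as a short exact complex `S` with `S.X₁ = H`, `S.X₂ = E`, `S.X₃ = G`, is pure
(image of `H` in `E` intersected with `nE` equals `n ·` (image of `H`) for all `n ≥ 1`)
iff its extension class in `Ext¹(G,H)` lies in `n · Ext¹(G,H)` for every `n ≥ 1`,
i.e. lies in `Pext¹(G,H)`. -/
theorem pure_iff_extClass_mem_pext (S : ShortComplex (ModuleCat.{0} ℤ))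
    (hS : S.ShortExact) :
    (∀ n : ℕ, 0 < n → ∀ x : S.X₂,
        ((x ∈ Set.range S.f ∧ ∃ e : S.X₂, n • e = x) ↔ ∃ y ∈ Set.range S.f, n • y = x)) ↔
      (∀ n : ℕ, 1 ≤ n → ∃ y : Abelian.Ext S.X₃ S.X₁ 1, n • y = hS.extClass) := by
  have hℤ (r : ℤ) : ∃ n : ℕ, Associated (n : ℤ) r := ⟨_, (Int.associated_natAbs r).symm⟩
  exact (isRDPure_range_iff_forall_nat hℤ S.f.hom).symm.trans <|
    (pure_iff_extClass_mem_pext_general S hS).trans <|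
      forall_exists_smul_eq_ext_iff_forall_nat hℤ hS.extClass
end

section
/- A short exact sequence of abelian groups 0 → H → E →π→ G → 0 is pure if and only if it splits when restricted to every finitely generated subgroup of G; that is, if and only if for every finitely generated subgroup F ⊆ G there is a homomorphism s : F → E with π∘s equal to the inclusion F ⊆ G. -/
/-!
A homomorphism out of `ZMod n` is an element killed by `n`, so purity of `π.ker` says exactly that
homomorphisms `ZMod n →+ G` lift along the surjection `π`: any lift `e` of an `n`-torsion element
satisfies `n • e ∈ π.ker`, and purity provides a correction `k ∈ π.ker` with `n • (e - k) = 0`.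
By the structure theorem a finitely generated abelian group is a direct sum of a free group, whose
homomorphisms always lift, and such cyclic groups.
-/

section Lifting

variable {A B E G : Type*} [AddCommGroup A] [AddCommGroup B] [AddCommGroup E] [AddCommGroup G]
  {π : E →+ G}

/-- `A` is projective relative to `π`: every homomorphism from `A` to the target of `π` factors
through `π`. -/
def LiftsAlong (A : Type*) [AddCommGroup A] (π : E →+ G) : Prop :=
  ∀ f : A →+ G, ∃ s : A →+ E, π.comp s = f

namespace LiftsAlong

theorem of_addEquiv (hA : LiftsAlong A π) (e : A ≃+ B) : LiftsAlong B π := by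
  intro f
  obtain ⟨s, hs⟩ := hA (f.comp e.toAddMonoidHom)
  refine ⟨s.comp e.symm.toAddMonoidHom, ?_⟩
  rw [← AddMonoidHom.comp_assoc, hs]
  ext b
  simp

theorem of_projective [Module.Projective ℤ A] (hπ : Function.Surjective π) : LiftsAlong A π := by
  intro f
  obtain ⟨s, hs⟩ := Module.projective_lifting_property π.toIntLinearMap f.toIntLinearMap hπ
  exact ⟨s.toAddMonoidHom, AddMonoidHom.ext (LinearMap.congr_fun hs)⟩

theorem prod (hA : LiftsAlong A π) (hB : LiftsAlong B π) : LiftsAlong (A × B) π := by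
  intro f
  obtain ⟨s, hs⟩ := hA (f.comp (AddMonoidHom.inl A B))
  obtain ⟨t, ht⟩ := hB (f.comp (AddMonoidHom.inr A B))
  exact ⟨s.coprod t, by rw [AddMonoidHom.comp_coprod, hs, ht, AddMonoidHom.coprod_unique]⟩

theorem directSum {I : Type*} {C : I → Type*} [∀ i, AddCommGroup (C i)]
    (hC : ∀ i, LiftsAlong (C i) π) : LiftsAlong (DirectSum I C) π := by
  classical
  intro f
  choose s hs using fun i => hC i (f.comp (DirectSum.of C i))
  refine ⟨DirectSum.toAddMonoid s, DirectSum.addHom_ext fun i c => ?_⟩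
  simpa using DFunLike.congr_fun (hs i) c

theorem zmod_of_torsion_lift {n : ℕ}
    (h : ∀ g : G, n • g = 0 → ∃ e : E, n • e = 0 ∧ π e = g) :
    LiftsAlong (ZMod n) π := by
  intro f
  obtain ⟨e, hne, he⟩ := h (f 1) (by rw [← map_nsmul]; simp)
  refine ⟨ZMod.lift n ⟨zmultiplesHom E e, by simpa using hne⟩, ?_⟩
  ext x
  obtain ⟨m, rfl⟩ := ZMod.intCast_surjective x
  calc π (ZMod.lift n ⟨zmultiplesHom E e, _⟩ m) = m • f 1 := by simp [he]
    _ = f m := by rw [← map_zsmul, zsmul_one]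

end LiftsAlong

end Lifting

section Purity

variable {A E G H : Type*} [AddCommGroup A] [AddCommGroup E] [AddCommGroup G] [AddCommGroup H]
  {π : E →+ G}

/-- Purity of a subgroup `K`, that is `K ∩ nE = nK` for all `n ≥ 1`, in terms of elements: every
multiple `n • e` lying in `K` equals `n • k` for some `k ∈ K`. -/
def IsPureAddSubgroup (K : AddSubgroup E) : Prop :=
  ∀ n : ℕ, 0 < n → ∀ e : E, n • e ∈ K → ∃ k ∈ K, n • k = n • e

theorem isPureAddSubgroup_range_iff {ι : H →+ E} :
    IsPureAddSubgroup ι.range ↔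
      ∀ n : ℕ, 0 < n → ι.range ⊓ (n • AddMonoidHom.id E).range = (n • ι).range := by
  refine forall₂_congr fun n _ => ?_
  have nsmul_range_le : (n • ι).range ≤ ι.range ⊓ (n • AddMonoidHom.id E).range := by
    rintro _ ⟨h, rfl⟩
    exact ⟨⟨n • h, map_nsmul ι n h⟩, ⟨ι h, rfl⟩⟩
  rw [← nsmul_range_le.ge_iff_eq']
  constructor
  · rintro hpure _ ⟨hmem, e, rfl⟩
    obtain ⟨_, ⟨h, rfl⟩, hh⟩ := hpure e hmem
    exact ⟨h, hh⟩
  · intro hle e hmem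
    obtain ⟨h, hh⟩ := hle ⟨hmem, e, rfl⟩
    exact ⟨ι h, ⟨h, rfl⟩, hh⟩

namespace IsPureAddSubgroup

theorem exists_torsion_lift (hpure : IsPureAddSubgroup π.ker) (hπ : Function.Surjective π)
    {n : ℕ} (hn : 0 < n) {g : G} (hg : n • g = 0) : ∃ e : E, n • e = 0 ∧ π e = g := by
  obtain ⟨e, rfl⟩ := hπ g
  obtain ⟨k, hk, hke⟩ := hpure n hn e (by rwa [AddMonoidHom.mem_ker, map_nsmul])
  refine ⟨e - k, ?_, ?_⟩
  · rw [nsmul_sub, hke, sub_self]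
  · rw [map_sub, AddMonoidHom.mem_ker.mp hk, sub_zero]

theorem liftsAlong_of_fg [AddGroup.FG A] (hpure : IsPureAddSubgroup π.ker)
    (hπ : Function.Surjective π) : LiftsAlong A π := by
  obtain ⟨r, I, _, p, hp, k, ⟨e⟩⟩ := AddCommGroup.equiv_free_prod_directSum_zmod A
  have free_lifts : LiftsAlong (Fin r →₀ ℤ) π := .of_projective hπ
  have torsion_lifts : LiftsAlong (DirectSum I fun i => ZMod (p i ^ k i)) π :=
    .directSum fun i => .zmod_of_torsion_lift fun _ =>
      hpure.exists_torsion_lift hπ (pow_pos (hp i).pos _)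
  exact (free_lifts.prod torsion_lifts).of_addEquiv e.symm

theorem of_splits_on_zmultiples
    (hsplit : ∀ g : G, ∃ s : AddSubgroup.zmultiples g →+ E,
      π.comp s = (AddSubgroup.zmultiples g).subtype) :
    IsPureAddSubgroup π.ker := by
  intro n _ e hne
  obtain ⟨s, hs⟩ := hsplit (π e)
  let g : AddSubgroup.zmultiples (π e) := ⟨π e, AddSubgroup.mem_zmultiples _⟩
  have hsg : π (s g) = π e := DFunLike.congr_fun hs g
  have hng : n • g = 0 := Subtype.ext ((map_nsmul π n e).symm.trans hne)
  refine ⟨e - s g, ?_, ?_⟩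
  · rw [AddMonoidHom.mem_ker, map_sub, hsg, sub_self]
  · rw [nsmul_sub, ← map_nsmul, hng, map_zero, sub_zero]

end IsPureAddSubgroup

theorem pure_iff_splits_on_fg_subgroups_general (hπ : Function.Surjective π) :
    IsPureAddSubgroup π.ker ↔
      ∀ F : AddSubgroup G, F.FG → ∃ s : F →+ E, π.comp s = F.subtype := by
  constructor
  · intro hpure F hF
    have : AddGroup.FG F := (AddGroup.fg_iff_addSubgroup_fg F).mpr hF
    exact hpure.liftsAlong_of_fg hπ F.subtype
  · intro hsplit
    refine .of_splits_on_zmultiples fun g => hsplit _ ⟨{g}, ?_⟩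
    rw [Finset.coe_singleton, AddSubgroup.zmultiples_eq_closure]

end Purity

/-- A short exact sequence of abelian groups `0 → H → E →π→ G → 0` is pure
(i.e. `(image of H in E) ∩ nE = n·(image of H in E)` for every `n ≥ 1`)
iff it splits when restricted to every finitely generated subgroup `F ⊆ G`,
i.e. there is `s : F →+ E` with `π ∘ s` equal to the inclusion `F ⊆ G`. -/
theorem pure_iff_splits_on_fg_subgroups (G H E : Type) [AddCommGroup G] [AddCommGroup H]
    [AddCommGroup E] (ι : H →+ E) (π : E →+ G)
    (hι : Function.Injective ι) (hπ : Function.Surjective π)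
    (hexact : ∀ e : E, π e = 0 ↔ e ∈ ι.range) :
    (∀ n : ℕ, 0 < n → ι.range ⊓ (n • AddMonoidHom.id E).range = (n • ι).range) ↔
      (∀ F : AddSubgroup G, F.FG → ∃ s : ↥F →+ E, π.comp s = F.subtype) := by
  have hker : π.ker = ι.range := AddSubgroup.ext hexact
  rw [← isPureAddSubgroup_range_iff, ← hker]
  exact pure_iff_splits_on_fg_subgroups_general hπ
end

section
/- If the abelian group G is an (internal) direct sum of cyclic subgroups, then for every abelian group H one has Pext¹(G,H) = 0, i.e. ⋂_{n≥1} n·Ext¹(G,H) = {0}. -/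
open CategoryTheory DirectSum

/-!
Represent a class `x ∈ Ext¹(G, H)` by a cocycle `f : P₁ → H` on a projective resolution
`P₁ → P₀ → G` and push out along `f` to an extension `0 → H → E → G → 0`, so that `x = 0` as soon
as `E → G` has a section. If `x` is divisible by `a`, then every `c ∈ G` whose annihilator is
generated by `a` lifts to some `e ∈ E` with `a e = 0`. When `G` is the direct sum of the cyclic
modules `R c`, sending each generator `c` to such a lift `e` defines a section.
-/

section DirectSumOfCyclic

variable {R G E ι : Type*} [Ring R] [AddCommGroup G] [Module R G] [AddCommGroup E] [Module R E]
  [DecidableEq ι] {c : ι → G}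

theorem exists_linearMap_span_singleton_apply_eq {c : G} {e : E}
    (hce : Ideal.torsionOf R G c ≤ Ideal.torsionOf R E e) :
    ∃ φ : Submodule.span R {c} →ₗ[R] E, φ ⟨c, Submodule.mem_span_singleton_self c⟩ = e := by
  refine ⟨(Ideal.torsionOf R G c).liftQ (LinearMap.toSpanSingleton R E e) hce ∘ₗ
    (Ideal.quotTorsionOfEquivSpanSingleton R G c).symm, ?_⟩
  have hc : (Ideal.quotTorsionOfEquivSpanSingleton R G c).symm
      ⟨c, Submodule.mem_span_singleton_self c⟩ = Submodule.Quotient.mk 1 := by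
    rw [LinearEquiv.symm_apply_eq, Ideal.quotTorsionOfEquivSpanSingleton_apply_mk, one_smul]
  simpa [hc] using Submodule.liftQ_apply (Ideal.torsionOf R G c) (h := hce) _ 1

theorem exists_linearMap_apply_eq_of_isInternal_span
    (hint : IsInternal fun i ↦ Submodule.span R {c i}) {e : ι → E}
    (hce : ∀ i, Ideal.torsionOf R G (c i) ≤ Ideal.torsionOf R E (e i)) :
    ∃ φ : G →ₗ[R] E, ∀ i, φ (c i) = e i := by
  choose φ hφ using fun i ↦ exists_linearMap_span_singleton_apply_eq (hce i)
  let decomposition := LinearEquiv.ofBijective (coeLinearMap fun i ↦ Submodule.span R {c i}) hint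
  refine ⟨toModule R ι E φ ∘ₗ decomposition.symm, fun i ↦ ?_⟩
  have hc : decomposition.symm (c i) =
      lof R ι _ i ⟨c i, Submodule.mem_span_singleton_self (c i)⟩ := by
    rw [LinearEquiv.symm_apply_eq]
    exact (coeLinearMap_lof _ i ⟨c i, Submodule.mem_span_singleton_self (c i)⟩).symm
  simp [hc, hφ]

theorem exists_section_of_isInternal_span
    (hint : IsInternal fun i ↦ Submodule.span R {c i}) (p : E →ₗ[R] G)
    (hlift : ∀ i, ∃ e, p e = c i ∧ Ideal.torsionOf R G (c i) ≤ Ideal.torsionOf R E e) :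
    ∃ s : G →ₗ[R] E, p ∘ₗ s = LinearMap.id := by
  choose e hpe hce using hlift
  obtain ⟨s, hs⟩ := exists_linearMap_apply_eq_of_isInternal_span hint hce
  have hspan : Submodule.span R (Set.range c) = ⊤ :=
    Submodule.span_range_eq_iSup.trans hint.submodule_iSup_eq_top
  exact ⟨s, LinearMap.ext_on_range hspan fun i ↦ by simp [hs, hpe]⟩

end DirectSumOfCyclic

section PushoutExtension

variable {R K P G H : Type*} [Ring R] [AddCommGroup K] [Module R K] [AddCommGroup P] [Module R P]
  [AddCommGroup G] [Module R G] [AddCommGroup H] [Module R H]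

/-- The pushout `P ⊔_K H` of `d : K → P` and `f : K → H`, as the quotient of `P × H` by the
elements `(d y, -f y)`. When `d` has cokernel `G`, it is the middle term of the extension of `G`
by `H` attached to `f`. -/
abbrev PushoutExtension (d : K →ₗ[R] P) (f : K →ₗ[R] H) : Type _ :=
  (P × H) ⧸ LinearMap.range (d.prod (-f))

namespace PushoutExtension

variable (d : K →ₗ[R] P) (f : K →ₗ[R] H) {π : P →ₗ[R] G}

/-- The canonical map from `P` to the pushout `P ⊔_K H`. -/
def inl : P →ₗ[R] PushoutExtension d f :=
  (LinearMap.range (d.prod (-f))).mkQ ∘ₗ LinearMap.inl R P H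

/-- The canonical map from `H` to the pushout `P ⊔_K H`; the inclusion of the extension. -/
def inr : H →ₗ[R] PushoutExtension d f :=
  (LinearMap.range (d.prod (-f))).mkQ ∘ₗ LinearMap.inr R P H

/-- The map from the pushout `P ⊔_K H` that is `π` on `P` and zero on `H`; the projection of the
extension. -/
def proj (hπd : π ∘ₗ d = 0) : PushoutExtension d f →ₗ[R] G :=
  (LinearMap.range (d.prod (-f))).liftQ (π ∘ₗ LinearMap.fst R P H) <| by
    rintro _ ⟨y, rfl⟩
    exact LinearMap.congr_fun hπd y

variable {d f}

theorem exists_inl_add_inr_eq (x : PushoutExtension d f) : ∃ p h, inl d f p + inr d f h = x := by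
  obtain ⟨⟨p, h⟩, rfl⟩ := Submodule.Quotient.mk_surjective _ x
  exact ⟨p, h, by simp [inl, inr, ← Submodule.Quotient.mk_add]⟩

theorem inl_apply_eq_inr_apply (y : K) : inl d f (d y) = inr d f (f y) :=
  (Submodule.Quotient.eq _).2 ⟨y, by simp⟩

@[simp]
theorem proj_inl (hπd : π ∘ₗ d = 0) (p : P) : proj d f hπd (inl d f p) = π p := by
  simp [proj, inl]

@[simp]
theorem proj_inr (hπd : π ∘ₗ d = 0) (h : H) : proj d f hπd (inr d f h) = 0 := by
  simp [proj, inr]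

theorem inr_injective (hf : LinearMap.ker d ≤ LinearMap.ker f) :
    Function.Injective (inr d f) := by
  refine (injective_iff_map_eq_zero _).2 fun h hh ↦ ?_
  obtain ⟨y, hy⟩ := (Submodule.Quotient.mk_eq_zero _).1 hh
  have hdy : d y = 0 := congrArg Prod.fst hy
  have hfy : -f y = h := congrArg Prod.snd hy
  rw [← hfy, LinearMap.mem_ker.1 (hf hdy), neg_zero]

theorem exact_inr_proj (hexact : Function.Exact d π) :
    Function.Exact (inr d f) (proj d f hexact.linearMap_comp_eq_zero) := by
  refine fun x ↦ ⟨fun hx ↦ ?_, ?_⟩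
  · obtain ⟨p, h, rfl⟩ := exists_inl_add_inr_eq x
    obtain ⟨y, rfl⟩ := (hexact p).1 (by simpa using hx)
    exact ⟨f y + h, by rw [map_add, inl_apply_eq_inr_apply]⟩
  · rintro ⟨h, rfl⟩
    exact proj_inr _ h

theorem exists_comp_eq_of_section (hexact : Function.Exact d π)
    (hf : LinearMap.ker d ≤ LinearMap.ker f)
    (hsection : ∃ s, proj d f hexact.linearMap_comp_eq_zero ∘ₗ s = LinearMap.id) :
    ∃ g : P →ₗ[R] H, g ∘ₗ d = f := by
  obtain ⟨-, retraction, hretraction⟩ :=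
    ((exact_inr_proj hexact).split_tfae'.out 0 1 rfl rfl).1 ⟨inr_injective hf, hsection⟩
  refine ⟨retraction ∘ₗ inl d f, LinearMap.ext fun y ↦ ?_⟩
  calc retraction (inl d f (d y)) = retraction (inr d f (f y)) := by rw [inl_apply_eq_inr_apply]
    _ = f y := LinearMap.congr_fun hretraction (f y)

end PushoutExtension

end PushoutExtension

section Divisibility

variable {R K P G H : Type*} [CommRing R] [AddCommGroup K] [Module R K] [AddCommGroup P]
  [Module R P] [AddCommGroup G] [Module R G] [AddCommGroup H] [Module R H]
  {d : K →ₗ[R] P} {π : P →ₗ[R] G} {f : K →ₗ[R] H}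

theorem exists_apply_eq_smul_of_apply_eq_smul (hf : LinearMap.ker d ≤ LinearMap.ker f) {a : R}
    (hdiv : a ≠ 0 → ∃ (w : K →ₗ[R] H) (g : P →ₗ[R] H), a • w + g ∘ₗ d = f)
    {y : K} {p : P} (hy : d y = a • p) : ∃ h, f y = a • h := by
  rcases eq_or_ne a 0 with rfl | ha
  · exact ⟨0, by rw [smul_zero]; exact hf (by simp [hy])⟩
  · obtain ⟨w, g, rfl⟩ := hdiv ha
    exact ⟨w y + g p, by simp [hy]⟩

open PushoutExtension in
theorem exists_lift_torsionOf_le (hexact : Function.Exact d π) (hπ : Function.Surjective π)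
    (hf : LinearMap.ker d ≤ LinearMap.ker f) {c : G} {a : R}
    (hc : Ideal.torsionOf R G c = Ideal.span {a})
    (hdiv : a ≠ 0 → ∃ (w : K →ₗ[R] H) (g : P →ₗ[R] H), a • w + g ∘ₗ d = f) :
    ∃ e, proj d f hexact.linearMap_comp_eq_zero e = c ∧
      Ideal.torsionOf R G c ≤ Ideal.torsionOf R (PushoutExtension d f) e := by
  obtain ⟨p, rfl⟩ := hπ c
  have hap : a • π p = 0 :=
    (Ideal.mem_torsionOf_iff _ _).1 (hc ▸ Ideal.mem_span_singleton_self a)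
  obtain ⟨y, hy⟩ := (hexact (a • p)).1 (by rw [map_smul, hap])
  obtain ⟨h, hh⟩ := exists_apply_eq_smul_of_apply_eq_smul hf hdiv hy
  refine ⟨inl d f p - inr d f h, by simp, ?_⟩
  rw [hc, Ideal.span_singleton_le_iff_mem, Ideal.mem_torsionOf_iff, smul_sub, ← map_smul,
    ← map_smul, ← hy, ← hh, inl_apply_eq_inr_apply, sub_self]

theorem exists_comp_eq_of_isInternal_span {ι : Type*} [DecidableEq ι] {c : ι → G} {a : ι → R}
    (hint : IsInternal fun i ↦ Submodule.span R {c i})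
    (hc : ∀ i, Ideal.torsionOf R G (c i) = Ideal.span {a i})
    (hexact : Function.Exact d π) (hπ : Function.Surjective π)
    (hf : LinearMap.ker d ≤ LinearMap.ker f)
    (hdiv : ∀ i, a i ≠ 0 → ∃ (w : K →ₗ[R] H) (g : P →ₗ[R] H), a i • w + g ∘ₗ d = f) :
    ∃ g : P →ₗ[R] H, g ∘ₗ d = f :=
  PushoutExtension.exists_comp_eq_of_section hexact hf <|
    exists_section_of_isInternal_span hint _ fun i ↦
      exists_lift_torsionOf_le hexact hπ hf (hc i) (hdiv i)

end Divisibility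

universe u v

section Ext

theorem exists_linearMap_ker_homology {R : Type u} [Ring R] (S : ShortComplex (ModuleCat.{v} R)) :
    ∃ q : LinearMap.ker S.g.hom →ₗ[R] S.homology, Function.Surjective q ∧
      ∀ z, q z = 0 ↔ ∃ y, S.f.hom y = z := by
  let e : S.homology ≃ₗ[R] (LinearMap.ker S.g.hom ⧸ LinearMap.range S.moduleCatToCycles) :=
    S.moduleCatHomologyIso.toLinearEquiv
  refine ⟨e.symm.toLinearMap ∘ₗ (LinearMap.range S.moduleCatToCycles).mkQ,
    e.symm.surjective.comp (Submodule.mkQ_surjective _), fun z ↦ ?_⟩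
  exact e.symm.map_eq_zero_iff.trans <|
    (Submodule.Quotient.mk_eq_zero _).trans <| exists_congr fun _ ↦ Subtype.ext_iff

theorem exists_linearMap_cocycles_ext {R C : Type*} [Ring R] [Category* C] [Abelian C]
    [Linear R C] [EnoughProjectives C] {X : C} (P : ProjectiveResolution X) (Y : C) (n : ℕ) :
    ∃ q : LinearMap.ker (Linear.leftComp R Y (P.complex.d (n + 2) (n + 1))) →ₗ[R]
        ((Ext R C (n + 1)).obj (Opposite.op X)).obj Y,
      Function.Surjective q ∧
        ∀ z, q z = 0 ↔ ∃ g, P.complex.d (n + 1) n ≫ g = (z : P.complex.X (n + 1) ⟶ Y) := by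
  let L := P.complex.linearYonedaObj R Y
  let e : ((Ext R C (n + 1)).obj (Opposite.op X)).obj Y ≃ₗ[R]
      (L.sc' n (n + 1) (n + 2)).homology :=
    (P.isoExt (n + 1) Y ≪≫ ShortComplex.homologyMapIso
      (L.isoSc' n (n + 1) (n + 2) (by simp) (by simp))).toLinearEquiv
  obtain ⟨q, hq, hker⟩ := exists_linearMap_ker_homology (L.sc' n (n + 1) (n + 2))
  exact ⟨e.symm.toLinearMap ∘ₗ q, e.symm.surjective.comp hq,
    fun z ↦ e.symm.map_eq_zero_iff.trans (hker z)⟩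

theorem ext_one_eq_zero_of_isInternal_span {R : Type u} [CommRing R] [Small.{v} R] {G H : Type v}
    [AddCommGroup G] [Module R G] [AddCommGroup H] [Module R H] {ι : Type*} [DecidableEq ι]
    {c : ι → G} {a : ι → R} (hint : IsInternal fun i ↦ Submodule.span R {c i})
    (hc : ∀ i, Ideal.torsionOf R G (c i) = Ideal.span {a i})
    (x : ((Ext R (ModuleCat.{v} R) 1).obj (Opposite.op (ModuleCat.of R G))).obj (ModuleCat.of R H))
    (hdiv : ∀ i, a i ≠ 0 → ∃ y, a i • y = x) : x = 0 := by
  let P := projectiveResolution (ModuleCat.of R G)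
  obtain ⟨q, hq, hq_zero⟩ := exists_linearMap_cocycles_ext (R := R) P (ModuleCat.of R H) 0
  obtain ⟨⟨f, hf⟩, rfl⟩ := hq x
  have hexact : Function.Exact (P.complex.d 1 0).hom (P.π.f 0).hom :=
    LinearMap.exact_iff.2 P.exact₀.moduleCat_range_eq_ker.symm
  have hsurj : Function.Surjective (P.π.f 0).hom :=
    (ModuleCat.epi_iff_surjective (P.π.f 0)).1 inferInstance
  have hf_ker : LinearMap.ker (P.complex.d 1 0).hom ≤ LinearMap.ker f.hom := by
    rw [← (P.exact_succ 0).moduleCat_range_eq_ker, LinearMap.range_le_ker_iff]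
    exact congrArg ModuleCat.Hom.hom hf
  have hf_div (i : ι) (ha : a i ≠ 0) :
      ∃ w g, a i • w + g ∘ₗ (P.complex.d 1 0).hom = f.hom := by
    obtain ⟨y, hy⟩ := hdiv i ha
    obtain ⟨w, rfl⟩ := hq y
    obtain ⟨g, hg⟩ := (hq_zero (⟨f, hf⟩ - a i • w)).1 (by rw [map_sub, map_smul, hy, sub_self])
    refine ⟨w.1.hom, g.hom, ?_⟩
    rw [← ModuleCat.hom_comp, hg]
    simp
  obtain ⟨g, hg⟩ := exists_comp_eq_of_isInternal_span hint hc hexact hsurj hf_ker hf_div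
  exact (hq_zero ⟨f, hf⟩).2 ⟨ModuleCat.ofHom g, ModuleCat.hom_ext hg⟩

theorem pext_eq_bot_of_directSum_of_cyclic_general {R : Type u} [CommRing R]
    [IsPrincipalIdealRing R] [Small.{v} R] (G H : Type v) [AddCommGroup G] [Module R G]
    [AddCommGroup H] [Module R H] {ι : Type*} [DecidableEq ι] (C : ι → Submodule R G)
    (hcyc : ∀ i, (C i).IsPrincipal) (hint : IsInternal C)
    (x : ((Ext R (ModuleCat.{v} R) 1).obj (Opposite.op (ModuleCat.of R G))).obj (ModuleCat.of R H))
    (hdiv : ∀ r : R, r ≠ 0 → ∃ y, r • y = x) : x = 0 := by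
  choose c hc using fun i ↦ (hcyc i).principal
  obtain rfl : C = fun i ↦ Submodule.span R {c i} := funext hc
  choose a ha using fun i ↦ (IsPrincipalIdealRing.principal (Ideal.torsionOf R G (c i))).principal
  exact ext_one_eq_zero_of_isInternal_span hint ha x fun i ↦ hdiv (a i)

end Ext

section Int

theorem isPrincipal_toIntSubmodule {G : Type*} [AddCommGroup G] {C : AddSubgroup G}
    (hC : ∃ g, C = AddSubgroup.closure {g}) : (AddSubgroup.toIntSubmodule C).IsPrincipal := by
  obtain ⟨g, rfl⟩ := hC
  exact ⟨g, AddSubgroup.toIntSubmodule_closure {g}⟩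

theorem exists_smul_eq_of_associated_natCast {R A : Type*} [Semiring R] [AddCommMonoid A]
    [Module R A] {n : ℕ} {r : R} (hnr : Associated (n : R) r) {x : A} (hx : ∃ y : A, n • y = x) :
    ∃ y : A, r • y = x := by
  obtain ⟨u, rfl⟩ := hnr
  obtain ⟨y, rfl⟩ := hx
  exact ⟨(↑u⁻¹ : R) • y, by rw [smul_smul, Units.mul_inv_cancel_right, Nat.cast_smul_eq_nsmul]⟩

theorem linear_int_subsingleton (C : Type*) [Category* C] [Preadditive C] :
    Subsingleton (Linear ℤ C) :=
  ⟨fun L₁ L₂ ↦ by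
    have hmodule : L₁.homModule = L₂.homModule := Subsingleton.elim _ _
    cases L₁
    cases L₂
    congr⟩

-- The linear structure varies because `Ext1` elaborates with `Linear.preadditiveIntLinear`, which
-- is only propositionally equal to `ModuleCat.instLinear`.
theorem ext_one_int_eq_zero_of_forall_exists_nsmul_eq [L : Linear ℤ (ModuleCat.{v} ℤ)]
    {G H : Type v} [AddCommGroup G] [AddCommGroup H] {ι : Type*} [DecidableEq ι]
    {C : ι → Submodule ℤ G} (hcyc : ∀ i, (C i).IsPrincipal) (hint : IsInternal C)
    (x : ((Ext ℤ (ModuleCat.{v} ℤ) 1).obj (Opposite.op (ModuleCat.of ℤ G))).obj (ModuleCat.of ℤ H))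
    (hdiv : ∀ n : ℕ, 1 ≤ n → ∃ y, n • y = x) : x = 0 := by
  obtain rfl : L = ModuleCat.instLinear := (linear_int_subsingleton _).elim _ _
  exact pext_eq_bot_of_directSum_of_cyclic_general G H C hcyc hint x fun r hr ↦
    exists_smul_eq_of_associated_natCast (Int.associated_natAbs r).symm <|
      hdiv r.natAbs (Int.natAbs_pos.2 hr)

theorem exists_nsmul_eq_of_mem_Pext1 {G H : Type} [AddCommGroup G] [AddCommGroup H] {x : Ext1 G H}
    (hx : x ∈ Pext1 G H) (n : ℕ) (hn : 1 ≤ n) : ∃ y, n • y = x := by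
  simp only [Pext1, AddSubgroup.mem_iInf] at hx
  exact hx n hn

end Int

/-- If the abelian group `G` is an internal direct sum of a family of cyclic subgroups,
then for every abelian group `H` one has `Pext¹(G,H) = 0`. -/
theorem pext_eq_bot_of_directSum_of_cyclic (G H : Type) [AddCommGroup G] [AddCommGroup H]
    (ι : Type) [DecidableEq ι] (C : ι → AddSubgroup G)
    (hcyc : ∀ i, ∃ g : G, C i = AddSubgroup.closure {g})
    (hint : DirectSum.IsInternal C) :
    Pext1 G H = ⊥ := by
  exact eq_bot_iff.2 fun x hx ↦ ext_one_int_eq_zero_of_forall_exists_nsmul_eq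
    (fun i ↦ isPrincipal_toIntSubmodule (hcyc i)) hint x (exists_nsmul_eq_of_mem_Pext1 hx)
end
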